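/- Let k ∈ {0,1}. Suppose m₀ is the unique maximizer of 𝑝̃ on [0,1], that L₁^{(ℓ)}(m₀) = 0 for all 0 ≤ ℓ ≤ 2k, and that L₁^{(2k+1)}(m₀) > 0. Set W = (M − N·m₀)/N^{(2k+1)/(2k+2)}, W' = (M' − N·m₀)/N^{(2k+1)/(2k+2)}, and c₀ = 2N^{(2k+1)/(k+1)}/L₂(m₀). Then E|1 − (c₀/2)·E[(W − W')²|W]| ≤ K·(N^{−1/(2k+2)} + N^{−1}) for a constant K independent of N. -/

import Mathlib

open Real Finset MeasureTheory

noncomputable section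

/-- Dimer configurations (matchings of the complete graph on `Fin N`), encoded as
involutions of `Fin N`: fixed points are monomers, 2-cycles are dimers. -/
abbrev Dimer (N : ℕ) := {f : Fin N → Fin N // ∀ i, f (f i) = i}

/-- The set of monomers (dimer-free vertices) of a dimer configuration. -/
def monomers {N : ℕ} (D : Dimer N) : Finset (Fin N) :=
  Finset.univ.filter fun i => D.1 i = i

/-- Monomer density `m(D) = |𝓜(D)|/N`. -/
def mDim {N : ℕ} (D : Dimer N) : ℝ := ((monomers D).card : ℝ) / N

/-- The parameter `b = (log N)/2 + h - J`. -/
def bIMD (N : ℕ) (J h : ℝ) : ℝ := Real.log N / 2 + h - J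

/-- The Gibbs weight `exp(-H(D)) = exp(N (a m(D)^2 + b m(D)))` with `a = J`. -/
def wDim (N : ℕ) (J h : ℝ) (D : Dimer N) : ℝ :=
  Real.exp (N * (J * mDim D ^ 2 + bIMD N J h * mDim D))

/-- The probability of an event `A` under the IMD Gibbs measure. -/
def probDim (N : ℕ) (J h : ℝ) (A : Dimer N → Prop) : ℝ :=
  (∑ D : Dimer N, Set.indicator {D | A D} (wDim N J h) D) / ∑ D : Dimer N, wDim N J h D

/-- The conditional probability `ℙ(A | B)` under the IMD Gibbs measure. -/
def condProbDim (N : ℕ) (J h : ℝ) (A B : Dimer N → Prop) : ℝ :=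
  (∑ D : Dimer N, Set.indicator {D | A D ∧ B D} (wDim N J h) D) /
    ∑ D : Dimer N, Set.indicator {D | B D} (wDim N J h) D

/-- `g(x) = (√(e^{4x} + 4 e^{2x}) - e^{2x})/2`. -/
def gFun (x : ℝ) : ℝ := (Real.sqrt (Real.exp (4*x) + 4 * Real.exp (2*x)) - Real.exp (2*x)) / 2

/-- `τ(x) = (2x-1)J + h`. -/
def tauFun (J h x : ℝ) : ℝ := (2*x - 1) * J + h

/-- `𝑝̃(m) = -J m² - (1 - g(τ(m)) + log(1 - g(τ(m))))/2`. -/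
def ptilde (J h m : ℝ) : ℝ :=
  -J * m^2 - (1 - gFun (tauFun J h m) + Real.log (1 - gFun (tauFun J h m))) / 2

/-- The CDF of a centered Gaussian with variance `v`, evaluated at `z`. -/
def gaussCDF (v : ℝ) (z : ℝ) : ℝ :=
  (ProbabilityTheory.gaussianReal 0 (Real.toNNReal v) (Set.Iic z)).toReal

/-- Spin configurations `Σ = {0,1}^N`. -/
abbrev Config (N : ℕ) := Fin N → Bool

/-- `𝓐(σ) = {i : σ_i = 1}`. -/
def ASet {N : ℕ} (σ : Config N) : Finset (Fin N) := Finset.univ.filter fun i => σ i = true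

/-- `M(σ) = ∑ σ_i`. -/
def Msum {N : ℕ} (σ : Config N) : ℕ := (ASet σ).card

/-- Magnetization `m(σ) = M(σ)/N`. -/
def mConf {N : ℕ} (σ : Config N) : ℝ := (Msum σ : ℝ) / N

/-- `D(σ)`: the number of dimer configurations `D` with `𝓜(D) = 𝓐(σ)`. -/
def Dcount (N : ℕ) (σ : Config N) : ℕ :=
  (Finset.univ.filter fun D : Dimer N => monomers D = ASet σ).card

/-- The weight `D(σ) exp(-H(σ))` of the weighted Curie–Weiss model. -/
def wConf (N : ℕ) (J h : ℝ) (σ : Config N) : ℝ :=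
  (Dcount N σ : ℝ) * Real.exp (N * (J * mConf σ ^ 2 + bIMD N J h * mConf σ))

/-- The probability of an event `A` under the weighted Curie–Weiss Gibbs measure. -/
def probConf (N : ℕ) (J h : ℝ) (A : Config N → Prop) : ℝ :=
  (∑ σ : Config N, Set.indicator {σ | A σ} (wConf N J h) σ) / ∑ σ : Config N, wConf N J h σ

/-- Expectation under the weighted Curie–Weiss Gibbs measure. -/
def EConf (N : ℕ) (J h : ℝ) (f : Config N → ℝ) : ℝ :=
  (∑ σ : Config N, wConf N J h σ * f σ) / ∑ σ : Config N, wConf N J h σ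

/-- `L₁(m) = 2(1-m)(m² - (1-m)e^{2τ(m)})/((1-m) + e^{2τ(m)})`. -/
def Lone (J h m : ℝ) : ℝ :=
  2*(1-m)*(m^2 - (1-m)*Real.exp (2 * tauFun J h m)) / ((1-m) + Real.exp (2 * tauFun J h m))

/-- `L₂(m) = 4(1-m)(m² + (1-m)e^{2τ(m)})/((1-m) + e^{2τ(m)})`. -/
def Ltwo (J h m : ℝ) : ℝ :=
  4*(1-m)*(m^2 + (1-m)*Real.exp (2 * tauFun J h m)) / ((1-m) + Real.exp (2 * tauFun J h m))

/-- The configuration obtained from `σ` by setting the spins at `u, v` to `s, t`. -/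
def upd {N : ℕ} (σ : Config N) (u v : Fin N) (s t : Bool) : Config N :=
  fun i => if i = u then s else if i = v then t else σ i

/-- The edges of the complete graph, enumerated as ordered pairs `u < v`. -/
def cEdges (N : ℕ) : Finset (Fin N × Fin N) := Finset.univ.filter fun p => p.1 < p.2

/-- The probability of resampling the pair of spins at `(u,v)` to `(s,t)`:
the conditional distribution of `(σ_u, σ_v)` given `(σ_i)_{i ≠ u,v}`. -/
def qCond (N : ℕ) (J h : ℝ) (σ : Config N) (u v : Fin N) (s t : Bool) : ℝ :=
  wConf N J h (upd σ u v s t) / ∑ st : Bool × Bool, wConf N J h (upd σ u v st.1 st.2)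

/-- `E[F(σ, σ') | σ]` for the exchangeable pair `(σ, σ')` obtained by resampling the
spins at a uniformly chosen edge. -/
def condE2 (N : ℕ) (J h : ℝ) (F : Config N → Config N → ℝ) (σ : Config N) : ℝ :=
  ((cEdges N).card : ℝ)⁻¹ * ∑ p ∈ cEdges N, ∑ st : Bool × Bool,
    qCond N J h σ p.1 p.2 st.1 st.2 * F σ (upd σ p.1 p.2 st.1 st.2)

/-- The weight of the Gibbs measure conditioned on the event `S`. -/
def wCond (N : ℕ) (J h : ℝ) (S : Config N → Prop) (σ : Config N) : ℝ :=
  Set.indicator {σ | S σ} (wConf N J h) σ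

/-- `ℙ_ℓ(A) = ℙ(A | S)`, probability under the conditioned Gibbs measure. -/
def probL (N : ℕ) (J h : ℝ) (S A : Config N → Prop) : ℝ :=
  (∑ σ : Config N, Set.indicator {σ | A σ} (wCond N J h S) σ) / ∑ σ : Config N, wCond N J h S σ

/-- Expectation under the conditioned Gibbs measure `ℙ(·|S)`. -/
def EL (N : ℕ) (J h : ℝ) (S : Config N → Prop) (f : Config N → ℝ) : ℝ :=
  (∑ σ : Config N, wCond N J h S σ * f σ) / ∑ σ : Config N, wCond N J h S σ

/-- Resampling probability for the conditioned measure `ℙ(·|S)`. -/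
def qCondL (N : ℕ) (J h : ℝ) (S : Config N → Prop) (σ : Config N) (u v : Fin N)
    (s t : Bool) : ℝ :=
  wCond N J h S (upd σ u v s t) / ∑ st : Bool × Bool, wCond N J h S (upd σ u v st.1 st.2)

/-- `E_ℓ[F(σ, σ') | σ]` for the exchangeable pair under the conditioned measure. -/
def condE2L (N : ℕ) (J h : ℝ) (S : Config N → Prop) (F : Config N → Config N → ℝ)
    (σ : Config N) : ℝ :=
  ((cEdges N).card : ℝ)⁻¹ * ∑ p ∈ cEdges N, ∑ st : Bool × Bool,
    qCondL N J h S σ p.1 p.2 st.1 st.2 * F σ (upd σ p.1 p.2 st.1 st.2)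

/-- The maximizer set `O` of `𝑝̃` on `[0,1]`. -/
def maxSet (J h : ℝ) : Set ℝ :=
  {x | x ∈ Set.Icc (0:ℝ) 1 ∧ ∀ y ∈ Set.Icc (0:ℝ) 1, ptilde J h y ≤ ptilde J h x}

end

/-! ### Counting matchings -/

/-- The number of perfect matchings of the complete graph on `n` vertices. -/
def perfectMatchingCount : ℕ → ℕ
  | 0 => 1
  | 1 => 0
  | n + 2 => (n + 1) * perfectMatchingCount n

/-- The dimer configurations covering exactly the vertices of `S`. -/
def dimersCovering {N : ℕ} (S : Finset (Fin N)) : Finset (Dimer N) :=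
  Finset.univ.filter fun D => ∀ i, D.1 i ≠ i ↔ i ∈ S

theorem mem_dimersCovering {N : ℕ} {S : Finset (Fin N)} {D : Dimer N} :
    D ∈ dimersCovering S ↔ ∀ i, D.1 i ≠ i ↔ i ∈ S := by
  simp [dimersCovering]

theorem card_dimersCovering_filter {N : ℕ} {S : Finset (Fin N)} {u v : Fin N}
    (hu : u ∈ S) (hv : v ∈ S) (huv : u ≠ v) :
    ((dimersCovering S).filter fun D => D.1 u = v).card =
      (dimersCovering ((S.erase u).erase v)).card := by
  have key : ∀ D : Dimer N, (D.1 u = v ∨ (D.1 u = u ∧ D.1 v = v)) →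
      ∀ i, D.1 (Equiv.swap u v (D.1 (Equiv.swap u v i))) = i := by
    rintro ⟨f, hf⟩ hD i
    simp only at hD ⊢
    have h1 := hf u
    have h2 := hf v
    have h3 := hf i
    rcases hD with hD | ⟨hD1, hD2⟩
    · rw [hD] at h1
      by_cases hiu : i = u
      · subst hiu; simp [h1]
      by_cases hiv : i = v
      · subst hiv; simp [hD]
      rw [Equiv.swap_apply_of_ne_of_ne hiu hiv, Equiv.swap_apply_of_ne_of_ne, h3]
      · intro hh; rw [hh] at h3; exact hiv (h3.symm.trans hD)
      · intro hh; rw [hh] at h3; exact hiu (h3.symm.trans h1)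
    · by_cases hiu : i = u
      · subst hiu; simp [hD1, hD2]
      by_cases hiv : i = v
      · subst hiv; simp [hD1, hD2]
      rw [Equiv.swap_apply_of_ne_of_ne hiu hiv, Equiv.swap_apply_of_ne_of_ne, h3]
      · intro hh; rw [hh] at h3; exact hiu (h3.symm.trans hD1)
      · intro hh; rw [hh] at h3; exact hiv (h3.symm.trans hD2)
  refine Finset.card_bij'
    (fun D hD => ⟨fun i => D.1 (Equiv.swap u v i), key D (Or.inl (Finset.mem_filter.1 hD).2)⟩)
    (fun D hD => ⟨fun i => D.1 (Equiv.swap u v i), key D (Or.inr ?_)⟩) ?_ ?_ ?_ ?_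
  · rw [mem_dimersCovering] at hD
    constructor
    · by_contra hh; simpa using (hD u).1 hh
    · by_contra hh; simpa using (hD v).1 hh
  · intro D hD
    rw [Finset.mem_filter, mem_dimersCovering] at hD
    obtain ⟨hD, huv'⟩ := hD
    have hvu : D.1 v = u := by rw [← huv']; exact D.2 u
    rw [mem_dimersCovering]
    intro i
    by_cases hiu : i = u
    · subst hiu; simp [hvu]
    by_cases hiv : i = v
    · subst hiv; simp [huv']
    simpa [Equiv.swap_apply_of_ne_of_ne hiu hiv, hiu, hiv] using hD i
  · intro D hD
    rw [mem_dimersCovering] at hD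
    have hu' : D.1 u = u := by by_contra hh; simpa using (hD u).1 hh
    have hv' : D.1 v = v := by by_contra hh; simpa using (hD v).1 hh
    rw [Finset.mem_filter, mem_dimersCovering]
    refine ⟨fun i => ?_, by simp [hv']⟩
    by_cases hiu : i = u
    · subst hiu; simp [hv', huv.symm, hu]
    by_cases hiv : i = v
    · subst hiv; simp [hu', huv, hv]
    simpa [Equiv.swap_apply_of_ne_of_ne hiu hiv, hiu, hiv] using hD i
  · intro D hD; ext i; simp
  · intro D hD; ext i; simp

theorem card_dimersCovering {N : ℕ} (n : ℕ) :
    ∀ S : Finset (Fin N), S.card = n → (dimersCovering S).card = perfectMatchingCount n := by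
  induction n using Nat.strong_induction_on with
  | _ n ih =>
    intro S hS
    rcases S.eq_empty_or_nonempty with rfl | ⟨u, hu⟩
    · simp only [Finset.card_empty] at hS
      subst hS
      rw [perfectMatchingCount, Finset.card_eq_one]
      refine ⟨⟨id, fun _ => rfl⟩, ?_⟩
      ext D
      rw [mem_dimersCovering, Finset.mem_singleton]
      constructor
      · intro hD
        ext i
        have := hD i
        simp only [Finset.notMem_empty, iff_false, not_not] at this
        simp [this]
      · rintro rfl; simp
    · have hmaps : ∀ D ∈ dimersCovering S, D.1 u ∈ S.erase u := by
        intro D hD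
        rw [mem_dimersCovering] at hD
        rw [Finset.mem_erase]
        refine ⟨(hD u).2 hu, (hD _).1 ?_⟩
        rw [D.2 u]
        exact ((hD u).2 hu).symm
      rw [Finset.card_eq_sum_card_fiberwise hmaps]
      have hcard : (S.erase u).card = n - 1 := by rw [Finset.card_erase_of_mem hu, hS]
      have hn : 1 ≤ n := by rw [← hS]; exact Finset.card_pos.2 ⟨u, hu⟩
      have hterm : ∀ v ∈ S.erase u, ((dimersCovering S).filter fun D => D.1 u = v).card =
          perfectMatchingCount (n - 2) := by
        intro v hv
        rw [card_dimersCovering_filter hu (Finset.mem_of_mem_erase hv)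
          (Finset.ne_of_mem_erase hv).symm]
        refine ih (n - 2) (by omega) _ ?_
        rw [Finset.card_erase_of_mem hv, hcard]
        omega
      rw [Finset.sum_congr rfl hterm, Finset.sum_const, hcard, smul_eq_mul]
      match n, hn with
      | 1, _ => simp [perfectMatchingCount]
      | m + 2, _ => simp [perfectMatchingCount]

theorem Dcount_eq {N : ℕ} (σ : Config N) :
    Dcount N σ = perfectMatchingCount (N - Msum σ) := by
  have hc : ((ASet σ)ᶜ).card = N - Msum σ := by
    rw [Finset.card_compl, Fintype.card_fin, Msum]
  rw [← card_dimersCovering _ _ hc, Dcount]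
  congr 1
  ext D
  simp only [Finset.mem_filter, Finset.mem_univ, true_and, mem_dimersCovering, Finset.ext_iff,
    monomers, Finset.mem_compl]
  exact forall_congr' fun i => not_iff_not.symm

theorem perfectMatchingCount_odd {n : ℕ} (hn : Odd n) : perfectMatchingCount n = 0 := by
  obtain ⟨q, rfl⟩ := hn
  induction q with
  | zero => rfl
  | succ q ih =>
    rw [show 2 * (q + 1) + 1 = (2 * q + 1) + 2 by ring, perfectMatchingCount, ih, mul_zero]

theorem perfectMatchingCount_sq_le (n : ℕ) : perfectMatchingCount n ^ 2 ≤ n.factorial := by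
  induction n using Nat.twoStepInduction with
  | zero => simp [perfectMatchingCount]
  | one => simp [perfectMatchingCount]
  | more n ih _ =>
    rw [perfectMatchingCount, Nat.factorial_succ, Nat.factorial_succ]
    calc ((n + 1) * perfectMatchingCount n) ^ 2
        = (n + 1) ^ 2 * perfectMatchingCount n ^ 2 := by ring
      _ ≤ (n + 1) ^ 2 * n.factorial := by gcongr
      _ ≤ (n + 1 + 1) * ((n + 1) * n.factorial) := by
        nlinarith [Nat.zero_le (n.factorial * (n + 1))]

theorem factorial_le_perfectMatchingCount_sq {n : ℕ} (hn : Even n) :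
    n.factorial ≤ perfectMatchingCount n ^ 2 * (n + 1) := by
  obtain ⟨q, rfl⟩ := hn
  induction q with
  | zero => simp [perfectMatchingCount]
  | succ q ih =>
    rw [show q + 1 + (q + 1) = (q + q) + 2 by ring, perfectMatchingCount, Nat.factorial_succ,
      Nat.factorial_succ]
    generalize q + q = n at *
    calc (n + 1 + 1) * ((n + 1) * n.factorial)
        ≤ (n + 1 + 1) * ((n + 1) * (perfectMatchingCount n ^ 2 * (n + 1))) := by gcongr
      _ ≤ ((n + 1) * perfectMatchingCount n) ^ 2 * (n + 2 + 1) := by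
        nlinarith [Nat.zero_le ((n + 1) ^ 2 * perfectMatchingCount n ^ 2)]

theorem perfectMatchingCount_pos {n : ℕ} (hn : Even n) : 0 < perfectMatchingCount n := by
  rcases Nat.eq_zero_or_pos (perfectMatchingCount n) with h0 | h0
  · have := factorial_le_perfectMatchingCount_sq hn
    rw [h0] at this
    have := n.factorial_pos
    omega
  · exact h0

/-! ### The law of the number of monomers -/

/-- The weight of a configuration with `j` up spins. -/
noncomputable def spinWeight (N : ℕ) (J h : ℝ) (j : ℕ) : ℝ :=
  (perfectMatchingCount (N - j) : ℝ) *
    Real.exp (N * (J * ((j : ℝ) / N) ^ 2 + bIMD N J h * ((j : ℝ) / N)))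

/-- The total weight of the configurations with `j` up spins. -/
noncomputable def levelWeight (N : ℕ) (J h : ℝ) (j : ℕ) : ℝ := (N.choose j : ℝ) * spinWeight N J h j

theorem wConf_eq {N : ℕ} (J h : ℝ) (σ : Config N) :
    wConf N J h σ = spinWeight N J h (Msum σ) := by
  rw [wConf, Dcount_eq, spinWeight, mConf]

theorem Msum_le {N : ℕ} (σ : Config N) : Msum σ ≤ N := by
  simpa [Msum] using Finset.card_le_univ (ASet σ)

theorem spinWeight_nonneg (N : ℕ) (J h : ℝ) (j : ℕ) : 0 ≤ spinWeight N J h j := by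
  unfold spinWeight; positivity

theorem wConf_nonneg {N : ℕ} (J h : ℝ) (σ : Config N) : 0 ≤ wConf N J h σ := by
  rw [wConf_eq]; exact spinWeight_nonneg ..

theorem levelWeight_nonneg (N : ℕ) (J h : ℝ) (j : ℕ) : 0 ≤ levelWeight N J h j :=
  mul_nonneg (Nat.cast_nonneg _) (spinWeight_nonneg ..)

theorem spinWeight_odd {N : ℕ} (J h : ℝ) {j : ℕ} (hj : Odd (N - j)) : spinWeight N J h j = 0 := by
  simp [spinWeight, perfectMatchingCount_odd hj]

theorem spinWeight_pos {N : ℕ} (J h : ℝ) {j : ℕ} (hj : Even (N - j)) :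
    0 < spinWeight N J h j := by
  have := perfectMatchingCount_pos hj
  unfold spinWeight; positivity

theorem sum_wConf_mul {N : ℕ} (J h : ℝ) (F : ℕ → ℝ) :
    ∑ σ : Config N, wConf N J h σ * F (Msum σ) =
      ∑ j ∈ Finset.range (N + 1), levelWeight N J h j * F j := by
  have h1 : ∑ σ : Config N, wConf N J h σ * F (Msum σ) =
      ∑ s ∈ (Finset.univ : Finset (Fin N)).powerset,
        (fun j => spinWeight N J h j * F j) s.card := by
    refine Finset.sum_bij' (fun σ _ => ASet σ) (fun s _ => fun i => decide (i ∈ s)) ?_ ?_ ?_ ?_ ?_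
    · simp
    · simp
    · intro σ _; ext i; simp [ASet]
    · intro s _; ext i; simp [ASet]
    · intro σ _; simp only [wConf_eq]; rfl
  rw [h1, Finset.sum_powerset_apply_card (fun j => spinWeight N J h j * F j)]
  simp [levelWeight, mul_assoc]

theorem sum_wConf_pos {N : ℕ} (J h : ℝ) : 0 < ∑ σ : Config N, wConf N J h σ := by
  refine Finset.sum_pos' (fun σ _ => wConf_nonneg J h σ) ⟨fun _ => true, Finset.mem_univ _, ?_⟩
  rw [wConf_eq]
  apply spinWeight_pos
  simp [Msum, ASet]

theorem spinWeight_add_two {N : ℕ} (J h : ℝ) {j : ℕ} (hj : j + 2 ≤ N) :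
    spinWeight N J h (j + 2) * ((N : ℝ) - j - 1) =
      spinWeight N J h j * (N * Real.exp (2 * tauFun J h ((j : ℝ) / N) + 4 * J / N)) := by
  have hN : (0 : ℝ) < N := by exact_mod_cast (by omega : 0 < N)
  obtain ⟨n, rfl⟩ : ∃ n, N = j + 2 + n := ⟨N - (j + 2), by omega⟩
  unfold spinWeight bIMD tauFun
  rw [show j + 2 + n - (j + 2) = n by omega, show j + 2 + n - j = n + 2 by omega,
    perfectMatchingCount]
  have hexp : ∀ M : ℝ, 0 < M →
      Real.exp (M * (J * (((j + 2 : ℕ) : ℝ) / M) ^ 2 +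
        (Real.log M / 2 + h - J) * (((j + 2 : ℕ) : ℝ) / M))) =
      Real.exp (M * (J * ((j : ℝ) / M) ^ 2 + (Real.log M / 2 + h - J) * ((j : ℝ) / M))) *
        (M * Real.exp (2 * ((2 * ((j : ℝ) / M) - 1) * J + h) + 4 * J / M)) := by
    intro M hM
    have hmul : ∀ y : ℝ, M * Real.exp y = Real.exp (Real.log M + y) := fun y => by
      rw [Real.exp_add, Real.exp_log hM]
    rw [hmul, ← Real.exp_add]
    congr 1
    push_cast
    field_simp
    ring
  rw [hexp _ hN]
  push_cast
  ring

theorem levelWeight_add_two {N : ℕ} (J h : ℝ) {j : ℕ} (hj : j + 2 ≤ N) :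
    levelWeight N J h (j + 2) * (((j : ℝ) + 2) * (j + 1)) =
      levelWeight N J h j *
        (N * ((N : ℝ) - j) * Real.exp (2 * tauFun J h ((j : ℝ) / N) + 4 * J / N)) := by
  have hchoose : (N.choose (j + 2) : ℝ) * (((j : ℝ) + 2) * (j + 1)) =
      N.choose j * (((N : ℝ) - j) * ((N : ℝ) - j - 1)) := by
    have h1 := Nat.choose_succ_right_eq N j
    have h2 := Nat.choose_succ_right_eq N (j + 1)
    have h1' : (N.choose (j + 1) : ℝ) * (j + 1) = N.choose j * ((N : ℝ) - j) := by
      rw [← Nat.cast_sub (by omega : j ≤ N)]; exact_mod_cast h1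
    have h2' : (N.choose (j + 2) : ℝ) * (j + 2) = N.choose (j + 1) * ((N : ℝ) - j - 1) := by
      have : ((N - (j + 1) : ℕ) : ℝ) = (N : ℝ) - j - 1 := by
        rw [Nat.cast_sub (by omega : j + 1 ≤ N)]; push_cast; ring
      rw [← this]; exact_mod_cast h2
    linear_combination (j + 1 : ℝ) * h2' + ((N : ℝ) - j - 1) * h1'
  have hs := spinWeight_add_two J h hj
  unfold levelWeight
  linear_combination spinWeight N J h (j + 2) * hchoose + (N.choose j : ℝ) * ((N : ℝ) - j) * hs

theorem sum_levelWeight_balance {N : ℕ} (hN : 1 ≤ N) (J h : ℝ) (φ : ℝ → ℝ) :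
    ∑ j ∈ Finset.range (N + 1), levelWeight N J h j * ((j : ℝ) * (j - 1) * φ (j - 2)) =
      ∑ j ∈ Finset.range (N + 1), levelWeight N J h j *
        (N * ((N : ℝ) - j) * Real.exp (2 * tauFun J h ((j : ℝ) / N) + 4 * J / N) * φ j) := by
  obtain ⟨n, rfl⟩ : ∃ n, N = n + 1 := ⟨N - 1, by omega⟩
  rw [Finset.sum_range_succ', Finset.sum_range_succ', Finset.sum_range_succ _ (n + 1),
    Finset.sum_range_succ _ n]
  have h0 : levelWeight (n + 1) J h n = 0 := by
    rw [levelWeight, spinWeight_odd _ _ (by simp), mul_zero]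
  rw [h0]
  simp only [zero_add, Nat.cast_zero, Nat.cast_one, sub_self, zero_mul, mul_zero, add_zero]
  refine Finset.sum_congr rfl fun j hj => ?_
  have := levelWeight_add_two J h (show j + 2 ≤ n + 1 by have := Finset.mem_range.1 hj; omega)
  push_cast at this ⊢
  rw [show (j : ℝ) + 1 + 1 - 2 = j by ring]
  linear_combination φ j * this

/-! ### Expectations -/

section Expectation

variable {N : ℕ} {J h : ℝ}

theorem EConf_mono {f g : Config N → ℝ} (hfg : ∀ σ, wConf N J h σ ≠ 0 → f σ ≤ g σ) :
    EConf N J h f ≤ EConf N J h g := by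
  unfold EConf
  refine div_le_div_of_nonneg_right (Finset.sum_le_sum fun σ _ => ?_) (sum_wConf_pos J h).le
  by_cases h0 : wConf N J h σ = 0
  · simp [h0]
  · exact mul_le_mul_of_nonneg_left (hfg σ h0) (wConf_nonneg J h σ)

theorem EConf_add (f g : Config N → ℝ) :
    EConf N J h (fun σ => f σ + g σ) = EConf N J h f + EConf N J h g := by
  simp [EConf, mul_add, Finset.sum_add_distrib, add_div]

theorem EConf_const_mul (c : ℝ) (f : Config N → ℝ) :
    EConf N J h (fun σ => c * f σ) = c * EConf N J h f := by
  unfold EConf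
  rw [← mul_div_assoc, Finset.mul_sum]
  congr 1
  exact Finset.sum_congr rfl fun σ _ => by ring

theorem EConf_const (c : ℝ) : EConf N J h (fun _ => c) = c := by
  unfold EConf
  rw [← Finset.sum_mul, mul_div_cancel_left₀ _ (sum_wConf_pos J h).ne']

theorem EConf_balance (hN : 1 ≤ N) (J h : ℝ) (φ : ℝ → ℝ) :
    EConf N J h (fun σ => mConf σ * (mConf σ - 1 / N) * φ (mConf σ - 2 / N)) =
      EConf N J h (fun σ => (1 - mConf σ) *
        Real.exp (2 * tauFun J h (mConf σ) + 4 * J / N) * φ (mConf σ)) := by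
  have hN0 : (N : ℝ) ≠ 0 := by exact_mod_cast (by omega : N ≠ 0)
  have hbal := sum_levelWeight_balance hN J h (fun x => φ (x / N) / (N : ℝ) ^ 2)
  unfold EConf
  congr 1
  have e1 := sum_wConf_mul (N := N) J h
    (fun j => (j : ℝ) / N * ((j : ℝ) / N - 1 / N) * φ ((j : ℝ) / N - 2 / N))
  have e2 := sum_wConf_mul (N := N) J h
    (fun j => (1 - (j : ℝ) / N) * Real.exp (2 * tauFun J h ((j : ℝ) / N) + 4 * J / N) *
      φ ((j : ℝ) / N))
  unfold mConf
  rw [e1, e2]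
  convert hbal using 2 with j _ j _
  · rw [sub_div]; field_simp
  · field_simp

end Expectation

/-! ### Large deviation bounds for the number of monomers -/

/-- The exponential rate of the weight of the configurations with magnetization `m`. -/
noncomputable def freeEnergy (J h m : ℝ) : ℝ :=
  J * m ^ 2 + (h - J) * m + Real.negMulLog m + Real.negMulLog (1 - m) / 2 + m / 2 - 1 / 2

theorem continuous_freeEnergy (J h : ℝ) : Continuous (freeEnergy J h) := by
  have h1 : Continuous fun m : ℝ => Real.negMulLog (1 - m) :=
    Real.continuous_negMulLog.comp (by fun_prop)
  have h2 : Continuous fun m : ℝ => Real.negMulLog m := Real.continuous_negMulLog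
  unfold freeEnergy
  fun_prop

theorem gFun_sq (x : ℝ) : gFun x ^ 2 = (1 - gFun x) * Real.exp (2 * x) := by
  have hE : Real.exp (4 * x) = Real.exp (2 * x) ^ 2 := by
    rw [sq, ← Real.exp_add]; ring_nf
  have hs := Real.sq_sqrt (show 0 ≤ Real.exp (4 * x) + 4 * Real.exp (2 * x) by positivity)
  unfold gFun
  linear_combination (1 / 4) * hs + (1 / 4) * hE

theorem gFun_pos (x : ℝ) : 0 < gFun x := by
  have hE : Real.exp (4 * x) = Real.exp (2 * x) ^ 2 := by
    rw [sq, ← Real.exp_add]; ring_nf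
  have hp := Real.exp_pos (2 * x)
  have : Real.exp (2 * x) < Real.sqrt (Real.exp (4 * x) + 4 * Real.exp (2 * x)) := by
    apply Real.lt_sqrt_of_sq_lt
    linarith
  unfold gFun
  linarith

theorem gFun_lt_one (x : ℝ) : gFun x < 1 := by
  have h1 := gFun_sq x
  have h2 := gFun_pos x
  have h3 := Real.exp_pos (2 * x)
  by_contra hc
  nlinarith [mul_nonneg (sub_nonneg.2 (not_lt.1 hc)) h3.le]

theorem eq_gFun {x m : ℝ} (hm0 : 0 ≤ m) (hm : m ^ 2 = (1 - m) * Real.exp (2 * x)) :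
    m = gFun x := by
  have h1 := gFun_sq x
  have h2 := gFun_pos x
  have h3 := Real.exp_pos (2 * x)
  have : (m - gFun x) * (m + gFun x + Real.exp (2 * x)) = 0 := by linear_combination hm - h1
  rcases mul_eq_zero.1 this with h4 | h4
  · linarith
  · linarith

theorem two_mul_log_gFun (x : ℝ) : 2 * Real.log (gFun x) = Real.log (1 - gFun x) + 2 * x := by
  have h1 := congrArg Real.log (gFun_sq x)
  have h3 : (1 - gFun x) ≠ 0 := by linarith [gFun_lt_one x]
  rw [Real.log_mul h3 (Real.exp_pos _).ne', Real.log_exp, Real.log_pow] at h1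
  exact_mod_cast h1

theorem mul_log_add_negMulLog_le {x y : ℝ} (hx : 0 ≤ x) (hy : 0 < y) :
    x * Real.log y + Real.negMulLog x ≤ y - x := by
  rcases hx.eq_or_lt with rfl | hx
  · simpa using hy.le
  · have h1 := Real.log_le_sub_one_of_pos (div_pos hy hx)
    rw [Real.log_div hy.ne' hx.ne'] at h1
    have h2 := mul_le_mul_of_nonneg_left h1 hx.le
    rw [mul_sub, mul_sub, mul_div_cancel₀ _ hx.ne'] at h2
    unfold Real.negMulLog
    linarith

theorem freeEnergy_le_ptilde (J h : ℝ) {m : ℝ} (hm : m ∈ Set.Icc (0 : ℝ) 1) :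
    freeEnergy J h m ≤ ptilde J h m := by
  have hg0 := gFun_pos (tauFun J h m)
  have hg1 := gFun_lt_one (tauFun J h m)
  have hlog := two_mul_log_gFun (tauFun J h m)
  have h1 := mul_log_add_negMulLog_le hm.1 hg0
  have h2 := mul_log_add_negMulLog_le (sub_nonneg.2 hm.2) (sub_pos.2 hg1)
  unfold freeEnergy ptilde
  have hτ : 2 * tauFun J h m = 2 * ((2 * m - 1) * J + h) := rfl
  rw [hτ] at hlog
  have h3 := congrArg (fun t => m * t) hlog
  nlinarith

theorem freeEnergy_eq_ptilde {J h m : ℝ} (hm0 : 0 ≤ m)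
    (hm : m ^ 2 = (1 - m) * Real.exp (2 * tauFun J h m)) :
    freeEnergy J h m = ptilde J h m := by
  have hg := eq_gFun hm0 hm
  have hlog := two_mul_log_gFun (tauFun J h m)
  have hτ : 2 * tauFun J h m = 2 * ((2 * m - 1) * J + h) := rfl
  unfold ptilde freeEnergy Real.negMulLog
  rw [← hg] at hlog ⊢
  rw [hτ] at hlog
  linear_combination (-m / 2) * hlog

theorem le_log_factorial (n : ℕ) : n * Real.log n - n ≤ Real.log n.factorial := by
  rcases Nat.eq_zero_or_pos n with rfl | hn
  · simp
  have hn' : (0 : ℝ) < n := by exact_mod_cast hn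
  have h1 := Real.pow_div_factorial_le_exp (n : ℝ) hn'.le n
  have hf : (0 : ℝ) < n.factorial := by exact_mod_cast n.factorial_pos
  have h2 := Real.log_le_log (by positivity) h1
  rw [Real.log_div (by positivity) hf.ne', Real.log_pow, Real.log_exp] at h2
  linarith

theorem log_factorial_le_succ (n : ℕ) :
    Real.log n.factorial ≤ (n + 1) * Real.log (n + 1) - n := by
  induction n with
  | zero => simp
  | succ n ih =>
    have hf : (n.factorial : ℝ) ≠ 0 := by exact_mod_cast n.factorial_ne_zero
    have h2 : 1 ≤ ((n : ℝ) + 2) * (Real.log ((n : ℝ) + 1 + 1) - Real.log ((n : ℝ) + 1)) := by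
      have := Real.one_sub_inv_le_log_of_pos (show 0 < ((n : ℝ) + 1 + 1) / (n + 1) by positivity)
      rw [Real.log_div (by positivity) (by positivity)] at this
      have e : 1 - (((n : ℝ) + 1 + 1) / (n + 1))⁻¹ = (n + 2 : ℝ)⁻¹ := by
        field_simp; ring
      rw [e, inv_le_iff_one_le_mul₀ (by positivity)] at this
      linarith
    rw [Nat.factorial_succ]
    push_cast
    rw [Real.log_mul (by positivity) hf]
    linarith

theorem log_factorial_le (n : ℕ) :
    Real.log n.factorial ≤ n * Real.log n - n + 1 + Real.log (n + 1) := by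
  have h1 := log_factorial_le_succ n
  have h2 : n * (Real.log (n + 1) - Real.log n) ≤ 1 := by
    rcases Nat.eq_zero_or_pos n with rfl | hn
    · simp
    have hn' : (0 : ℝ) < n := by exact_mod_cast hn
    have := Real.log_le_sub_one_of_pos (show 0 < ((n : ℝ) + 1) / n by positivity)
    rw [Real.log_div (by positivity) (by positivity)] at this
    have h3 := mul_le_mul_of_nonneg_left this hn'.le
    have e : (n : ℝ) * (((n : ℝ) + 1) / n - 1) = 1 := by field_simp; ring
    linarith
  linarith

theorem mul_negMulLog_div {N : ℝ} (hN : 0 < N) (x : ℝ) :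
    N * Real.negMulLog (x / N) = x * Real.log N - x * Real.log x := by
  rcases eq_or_ne x 0 with rfl | hx
  · simp
  · rw [Real.negMulLog, Real.log_div hx hN.ne']
    field_simp
    ring

/-- The normalization of the level weights. -/
noncomputable def logScale (N : ℕ) : ℝ := Real.log N.factorial - N / 2 * Real.log N + N

theorem log_levelWeight {N j : ℕ} (hN : 1 ≤ N) (hj : j ≤ N) (hpar : Even (N - j)) (J h : ℝ) :
    Real.log (levelWeight N J h j) = logScale N + N * freeEnergy J h ((j : ℝ) / N)
      - (Real.log j.factorial - (j * Real.log j - j))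
      - (Real.log (N - j).factorial - ((N - j : ℕ) * Real.log (N - j : ℕ) - (N - j : ℕ))) / 2
      - (Real.log (N - j).factorial - 2 * Real.log (perfectMatchingCount (N - j))) / 2 := by
  have hN0 : (0 : ℝ) < N := by exact_mod_cast hN
  have hp : (0 : ℝ) < perfectMatchingCount (N - j) := by
    exact_mod_cast perfectMatchingCount_pos hpar
  have hj0 : (0 : ℝ) < j.factorial := by exact_mod_cast j.factorial_pos
  have hn0 : (0 : ℝ) < (N - j).factorial := by exact_mod_cast (N - j).factorial_pos
  have hNf : (0 : ℝ) < N.factorial := by exact_mod_cast N.factorial_pos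
  unfold levelWeight spinWeight
  rw [Nat.cast_choose ℝ hj, Real.log_mul (by positivity) (by positivity),
    Real.log_mul hp.ne' (Real.exp_pos _).ne', Real.log_exp,
    Real.log_div hNf.ne' (by positivity), Real.log_mul hj0.ne' hn0.ne']
  have e1 := mul_negMulLog_div hN0 (j : ℝ)
  have e2 := mul_negMulLog_div hN0 ((N - j : ℕ) : ℝ)
  have e3 : ((N - j : ℕ) : ℝ) / N = 1 - (j : ℝ) / N := by
    rw [Nat.cast_sub hj]; field_simp
  rw [e3] at e2
  unfold freeEnergy logScale bIMD
  rw [Nat.cast_sub hj] at e2 ⊢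
  have e4 : (N : ℝ) * ((j : ℝ) / N) = j := by field_simp
  linear_combination (-1 : ℝ) * e1 - (1 / 2) * e2 + (Real.log N / 2 - 1 / 2) * e4

theorem levelWeight_le {N j : ℕ} (hN : 1 ≤ N) (hj : j ≤ N) (J h : ℝ) :
    levelWeight N J h j ≤ Real.exp (logScale N + N * freeEnergy J h ((j : ℝ) / N)) := by
  rcases Nat.even_or_odd (N - j) with hpar | hpar
  · have hpos : 0 < levelWeight N J h j :=
      mul_pos (by exact_mod_cast Nat.choose_pos hj) (spinWeight_pos J h hpar)
    rw [← Real.log_le_iff_le_exp hpos, log_levelWeight hN hj hpar]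
    have h1 := le_log_factorial j
    have h2 := le_log_factorial (N - j)
    have hp : (0 : ℝ) < perfectMatchingCount (N - j) := by
      exact_mod_cast perfectMatchingCount_pos hpar
    have h3 : 2 * Real.log (perfectMatchingCount (N - j)) ≤ Real.log (N - j).factorial := by
      have := Real.log_le_log (by positivity)
        (show (perfectMatchingCount (N - j) : ℝ) ^ 2 ≤ (N - j).factorial by
          exact_mod_cast perfectMatchingCount_sq_le (N - j))
      rw [Real.log_pow] at this
      exact_mod_cast this
    linarith
  · rw [levelWeight, spinWeight_odd _ _ hpar, mul_zero]
    positivity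

theorem le_levelWeight {N j : ℕ} (hN : 1 ≤ N) (hj : j ≤ N) (hpar : Even (N - j)) (J h : ℝ) :
    Real.exp (logScale N + N * freeEnergy J h ((j : ℝ) / N)) ≤
      levelWeight N J h j * (Real.exp 2 * ((N : ℝ) + 1) ^ 2) := by
  have hpos : 0 < levelWeight N J h j :=
    mul_pos (by exact_mod_cast Nat.choose_pos hj) (spinWeight_pos J h hpar)
  have hN1 : (0 : ℝ) < (N : ℝ) + 1 := by positivity
  rw [← Real.le_log_iff_exp_le (by positivity), Real.log_mul hpos.ne' (by positivity),
    Real.log_mul (by positivity) (by positivity), Real.log_exp, Real.log_pow,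
    log_levelWeight hN hj hpar]
  have h1 := log_factorial_le j
  have h2 := log_factorial_le (N - j)
  have hp : (0 : ℝ) < perfectMatchingCount (N - j) := by
    exact_mod_cast perfectMatchingCount_pos hpar
  have h3 : Real.log (N - j).factorial ≤
      2 * Real.log (perfectMatchingCount (N - j)) + Real.log ((N - j : ℕ) + 1) := by
    have := Real.log_le_log (by exact_mod_cast (N - j).factorial_pos)
      (show ((N - j).factorial : ℝ) ≤
        (perfectMatchingCount (N - j) : ℝ) ^ 2 * ((N - j : ℕ) + 1) by
        exact_mod_cast factorial_le_perfectMatchingCount_sq hpar)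
    rw [Real.log_mul (by positivity) (by positivity), Real.log_pow] at this
    exact_mod_cast this
  have h4 : Real.log ((N - j : ℕ) + 1) ≤ Real.log ((N : ℝ) + 1) :=
    Real.log_le_log (by positivity) (by gcongr; omega)
  have h5 : Real.log ((j : ℝ) + 1) ≤ Real.log ((N : ℝ) + 1) :=
    Real.log_le_log (by positivity) (by gcongr)
  push_cast
  linarith

theorem exists_even_near {N : ℕ} (hN : 1 ≤ N) {m₀ : ℝ} (hm₀ : m₀ ∈ Set.Icc (0 : ℝ) 1) :
    ∃ j ≤ N, Even (N - j) ∧ |(j : ℝ) / N - m₀| ≤ 1 / N := by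
  have hN0 : (0 : ℝ) < N := by exact_mod_cast hN
  have hr1 := Nat.floor_le (mul_nonneg hN0.le hm₀.1)
  have hr2 := Nat.lt_floor_add_one ((N : ℝ) * m₀)
  set r := ⌊(N : ℝ) * m₀⌋₊
  have hrN : r ≤ N := by
    have : (r : ℝ) ≤ N := hr1.trans (by nlinarith [hm₀.2])
    exact_mod_cast this
  have key : ∀ j : ℕ, |(j : ℝ) - N * m₀| ≤ 1 → |(j : ℝ) / N - m₀| ≤ 1 / N := by
    intro j hj
    rw [show (j : ℝ) / N - m₀ = ((j : ℝ) - N * m₀) / N by field_simp, abs_div, abs_of_pos hN0]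
    gcongr
  rcases Nat.even_or_odd (N - r) with hp | hp
  · exact ⟨r, hrN, hp, key r (by rw [abs_le]; constructor <;> linarith)⟩
  · refine ⟨r + 1, ?_, ?_, key _ ?_⟩
    · obtain ⟨q, hq⟩ := hp; omega
    · obtain ⟨q, hq⟩ := hp; exact ⟨q, by omega⟩
    · push_cast
      rw [abs_le]; constructor <;> linarith

theorem exists_gap {J h m₀ δ : ℝ}
    (hmax : ∀ m ∈ Set.Icc (0 : ℝ) 1, m ≠ m₀ → freeEnergy J h m < freeEnergy J h m₀)
    (hδ : 0 < δ) :
    ∃ η > 0, ∀ m ∈ Set.Icc (0 : ℝ) 1, δ ≤ |m - m₀| →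
      freeEnergy J h m ≤ freeEnergy J h m₀ - η := by
  set S : Set ℝ := Set.Icc (0 : ℝ) 1 ∩ {m | δ ≤ |m - m₀|}
  have hS : IsCompact S :=
    isCompact_Icc.inter_right (isClosed_le continuous_const (by fun_prop))
  rcases S.eq_empty_or_nonempty with hE | hne
  · exact ⟨1, one_pos, fun m hm hd => absurd (show m ∈ S from ⟨hm, hd⟩) (by simp [hE])⟩
  · obtain ⟨x, hx, hxmax⟩ := hS.exists_isMaxOn hne (continuous_freeEnergy J h).continuousOn
    have hxne : x ≠ m₀ := by
      rintro rfl
      have := hx.2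
      simp only [Set.mem_ofPred_eq, sub_self, abs_zero] at this
      linarith
    refine ⟨freeEnergy J h m₀ - freeEnergy J h x, sub_pos.2 (hmax x hx.1 hxne), ?_⟩
    intro m hm hd
    have : freeEnergy J h m ≤ freeEnergy J h x := hxmax (show m ∈ S from ⟨hm, hd⟩)
    linarith

theorem mConf_mem {N : ℕ} (σ : Config N) : mConf σ ∈ Set.Icc (0 : ℝ) 1 := by
  refine ⟨by unfold mConf; positivity, ?_⟩
  unfold mConf
  exact div_le_one_of_le₀ (by exact_mod_cast Msum_le σ) (Nat.cast_nonneg _)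

theorem EConf_far_le {J h m₀ δ : ℝ} (hm₀ : m₀ ∈ Set.Icc (0 : ℝ) 1)
    (hmax : ∀ m ∈ Set.Icc (0 : ℝ) 1, m ≠ m₀ → freeEnergy J h m < freeEnergy J h m₀)
    (hδ : 0 < δ) :
    ∃ C : ℝ, 0 ≤ C ∧ ∃ N₀ : ℕ, ∀ N : ℕ, N₀ ≤ N → 1 ≤ N →
      EConf N J h (fun σ => if δ ≤ |mConf σ - m₀| then 1 else 0) ≤ C / N := by
  obtain ⟨η, hη, hgap⟩ := exists_gap hmax hδ
  obtain ⟨ε, hε, hcont⟩ := Metric.continuousAt_iff.1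
    ((continuous_freeEnergy J h).continuousAt (x := m₀)) (η / 2) (half_pos hη)
  refine ⟨8 * Real.exp 2 * (384 / η ^ 4), by positivity, ⌊1 / ε⌋₊ + 1, fun N hNε hN => ?_⟩
  have hN0 : (0 : ℝ) < N := by exact_mod_cast hN
  have hN1 : (1 : ℝ) ≤ N := by exact_mod_cast hN
  obtain ⟨j, hjN, hpar, hj⟩ := exists_even_near hN hm₀
  have hjε : |(j : ℝ) / N - m₀| < ε := by
    refine hj.trans_lt ?_
    rw [div_lt_comm₀ hN0 hε]
    exact (Nat.lt_floor_add_one _).trans_le (by exact_mod_cast hNε)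
  have hfj : freeEnergy J h m₀ - η / 2 ≤ freeEnergy J h ((j : ℝ) / N) := by
    have := hcont (x := (j : ℝ) / N) (by rwa [Real.dist_eq])
    rw [Real.dist_eq, abs_lt] at this
    linarith
  set Y := Real.exp (logScale N + N * (freeEnergy J h m₀ - η / 2)) with hY
  have hZ : ∑ σ : Config N, wConf N J h σ =
      ∑ i ∈ Finset.range (N + 1), levelWeight N J h i := by
    simpa using sum_wConf_mul (N := N) J h (fun _ => 1)
  have hYZ : Y ≤ (∑ σ : Config N, wConf N J h σ) * (Real.exp 2 * ((N : ℝ) + 1) ^ 2) := by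
    calc Y ≤ Real.exp (logScale N + N * freeEnergy J h ((j : ℝ) / N)) := by
          rw [hY]; gcongr
      _ ≤ levelWeight N J h j * (Real.exp 2 * ((N : ℝ) + 1) ^ 2) := le_levelWeight hN hjN hpar J h
      _ ≤ _ := by
          rw [hZ]
          gcongr
          exact Finset.single_le_sum (f := levelWeight N J h)
            (fun i _ => levelWeight_nonneg N J h i) (Finset.mem_range.2 (by omega))
  have hnum : ∑ σ : Config N, wConf N J h σ * (if δ ≤ |mConf σ - m₀| then 1 else 0) ≤
      ((N : ℝ) + 1) * (Y * Real.exp (-(N * η / 2))) := by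
    have e := sum_wConf_mul (N := N) J h (fun i => if δ ≤ |(i : ℝ) / N - m₀| then 1 else 0)
    unfold mConf
    rw [e]
    have hterm : ∀ i ∈ Finset.range (N + 1),
        levelWeight N J h i * (if δ ≤ |(i : ℝ) / N - m₀| then 1 else 0) ≤
          Y * Real.exp (-(N * η / 2)) := by
      intro i hi
      have hiN : i ≤ N := by have := Finset.mem_range.1 hi; omega
      split_ifs with hfar
      · rw [mul_one, hY, ← Real.exp_add]
        refine (levelWeight_le hN hiN J h).trans (Real.exp_le_exp.2 ?_)
        have hmem : (i : ℝ) / N ∈ Set.Icc (0 : ℝ) 1 :=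
          ⟨by positivity, div_le_one_of_le₀ (by exact_mod_cast hiN) hN0.le⟩
        have := mul_le_mul_of_nonneg_left (hgap _ hmem hfar) hN0.le
        linarith
      · rw [mul_zero, hY]; positivity
    refine (Finset.sum_le_card_nsmul _ _ _ hterm).trans ?_
    simp
  have hexp : Real.exp (-(N * η / 2)) ≤ 384 / η ^ 4 / N ^ 4 := by
    have h1 := Real.pow_div_factorial_le_exp (N * η / 2) (by positivity) 4
    rw [Real.exp_neg]
    have h2 := inv_anti₀ (by positivity) h1
    refine h2.trans (le_of_eq ?_)
    have : ((4 : ℕ).factorial : ℝ) = 24 := by norm_num [Nat.factorial]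
    rw [this]
    field_simp
    norm_num
  unfold EConf
  rw [div_le_iff₀ (sum_wConf_pos J h)]
  refine hnum.trans ?_
  have hZ0 := (sum_wConf_pos (N := N) J h).le
  set Z := ∑ σ : Config N, wConf N J h σ
  calc ((N : ℝ) + 1) * (Y * Real.exp (-(N * η / 2)))
      ≤ ((N : ℝ) + N) * ((Z * (Real.exp 2 * ((N : ℝ) + N) ^ 2)) * (384 / η ^ 4 / N ^ 4)) := by
        have hYZ' : Y ≤ Z * (Real.exp 2 * ((N : ℝ) + N) ^ 2) := hYZ.trans (by gcongr)
        have hY0 : 0 ≤ Y := by rw [hY]; positivity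
        gcongr
    _ = 8 * Real.exp 2 * (384 / η ^ 4) / N * Z := by
        field_simp
        ring

/-! ### The conditional second moment of the increment -/

theorem upd_self {N : ℕ} (σ : Config N) (u v : Fin N) : upd σ u v (σ u) (σ v) = σ := by
  funext i
  unfold upd
  split_ifs with h1 h2
  · rw [h1]
  · rw [h2]
  · rfl

theorem Msum_eq_sum {N : ℕ} (σ : Config N) : Msum σ = ∑ i, (σ i).toNat := by
  rw [Msum, ASet, Finset.card_filter]
  refine Finset.sum_congr rfl fun i _ => ?_
  cases σ i <;> simp

theorem exists_Msum_upd {N : ℕ} (σ : Config N) {u v : Fin N} (huv : u ≠ v) :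
    ∃ B : ℕ, ∀ s t, Msum (upd σ u v s t) = B + s.toNat + t.toNat := by
  refine ⟨∑ i ∈ (Finset.univ.erase u).erase v, (σ i).toNat, fun s t => ?_⟩
  have hv : v ∈ (Finset.univ : Finset (Fin N)).erase u := by simp [huv.symm]
  rw [Msum_eq_sum, ← Finset.sum_erase_add _ _ (Finset.mem_univ u), ← Finset.sum_erase_add _ _ hv]
  have h1 : ∑ i ∈ (Finset.univ.erase u).erase v, (upd σ u v s t i).toNat =
      ∑ i ∈ (Finset.univ.erase u).erase v, (σ i).toNat := by
    refine Finset.sum_congr rfl fun i hi => ?_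
    have h2 := Finset.ne_of_mem_erase hi
    have h3 := Finset.ne_of_mem_erase (Finset.mem_of_mem_erase hi)
    simp [upd, h2, h3]
  rw [h1]
  simp [upd, huv.symm]
  ring

/-- The mean squared increment of the magnetization when the spins at `u, v` are resampled. -/
noncomputable def edgeSecondMoment (N : ℕ) (J h : ℝ) (σ : Config N) (u v : Fin N) : ℝ :=
  ∑ st : Bool × Bool, qCond N J h σ u v st.1 st.2 *
    ((Msum σ : ℝ) - Msum (upd σ u v st.1 st.2)) ^ 2

theorem edgeSecondMoment_nonneg {N : ℕ} (J h : ℝ) (σ : Config N) (u v : Fin N) :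
    0 ≤ edgeSecondMoment N J h σ u v := by
  refine Finset.sum_nonneg fun st _ => mul_nonneg ?_ (sq_nonneg _)
  exact div_nonneg (wConf_nonneg ..) (Finset.sum_nonneg fun _ _ => wConf_nonneg ..)

theorem edgeSecondMoment_le {N : ℕ} (J h : ℝ) (σ : Config N) {u v : Fin N} (huv : u ≠ v) :
    edgeSecondMoment N J h σ u v ≤ 4 := by
  obtain ⟨B, hB⟩ := exists_Msum_upd σ huv
  have hσ : Msum σ = B + (σ u).toNat + (σ v).toNat := by
    rw [← hB (σ u) (σ v), upd_self]
  have hterm : ∀ st ∈ (Finset.univ : Finset (Bool × Bool)),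
      qCond N J h σ u v st.1 st.2 * ((Msum σ : ℝ) - Msum (upd σ u v st.1 st.2)) ^ 2 ≤
      qCond N J h σ u v st.1 st.2 * 4 := by
    rintro ⟨s, t⟩ _
    refine mul_le_mul_of_nonneg_left ?_
      (div_nonneg (wConf_nonneg ..) (Finset.sum_nonneg fun _ _ => wConf_nonneg ..))
    rw [hσ, hB]
    cases σ u <;> cases σ v <;> cases s <;> cases t <;> simp <;> ring_nf <;> norm_num
  refine (Finset.sum_le_sum hterm).trans ?_
  rw [← Finset.sum_mul]
  have : ∑ st : Bool × Bool, qCond N J h σ u v st.1 st.2 ≤ 1 := by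
    unfold qCond
    rw [← Finset.sum_div]
    exact div_self_le_one _
  linarith

theorem edgeSecondMoment_of_ne {N : ℕ} {J h : ℝ} {σ : Config N} (hw : wConf N J h σ ≠ 0)
    {u v : Fin N} (hne : σ u ≠ σ v) : edgeSecondMoment N J h σ u v = 0 := by
  have huv : u ≠ v := fun huv => hne (by rw [huv])
  obtain ⟨B, hB⟩ := exists_Msum_upd σ huv
  have hσ : Msum σ = B + 1 := by
    rw [← upd_self σ u v, hB]
    revert hne
    cases σ u <;> cases σ v <;> simp
  have hpar : Even (N - (B + 1)) := by
    rw [← hσ, ← Nat.not_odd_iff_even]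
    intro hodd
    exact hw (by rw [wConf_eq, spinWeight_odd J h hodd])
  have hle := Msum_le σ
  have h0 : spinWeight N J h B = 0 := by
    apply spinWeight_odd
    rw [hσ] at hle
    obtain ⟨q, hq⟩ := hpar
    exact ⟨q, by omega⟩
  have hB2 : B + 2 ≤ N := by
    have := Msum_le (upd σ u v true true)
    rw [hB] at this
    simp at this
    omega
  have h2 : spinWeight N J h (B + 1 + 1) = 0 := by
    apply spinWeight_odd
    obtain ⟨q, hq⟩ := hpar
    exact ⟨q - 1, by omega⟩
  unfold edgeSecondMoment qCond
  simp only [wConf_eq, hB, hσ, Fintype.sum_prod_type, Fintype.sum_bool]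
  simp [h0, h2]

theorem edgeSecondMoment_true {N : ℕ} {J h : ℝ} {σ : Config N} (hw : wConf N J h σ ≠ 0)
    {u v : Fin N} (huv : u ≠ v) (hu : σ u = true) (hv : σ v = true) :
    edgeSecondMoment N J h σ u v =
      4 * ((1 - mConf σ + 1 / N) * Real.exp (4 * J / N) /
        ((1 - mConf σ + 1 / N) * Real.exp (4 * J / N) + Real.exp (2 * tauFun J h (mConf σ)))) := by
  obtain ⟨B, hB⟩ := exists_Msum_upd σ huv
  have hσ : Msum σ = B + 2 := by
    rw [← upd_self σ u v, hB, hu, hv]; simp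
  have hle := Msum_le σ
  have hN0 : (0 : ℝ) < N := by exact_mod_cast (by omega : 0 < N)
  have hpar : Even (N - (B + 2)) := by
    rw [← hσ, ← Nat.not_odd_iff_even]
    intro hodd
    exact hw (by rw [wConf_eq, spinWeight_odd J h hodd])
  have h1 : spinWeight N J h (B + 1) = 0 := by
    apply spinWeight_odd
    obtain ⟨q, hq⟩ := hpar
    exact ⟨q, by omega⟩
  have hratio := spinWeight_add_two J h (show B + 2 ≤ N by omega)
  have hpos := spinWeight_pos J h hpar
  have hp0 := spinWeight_nonneg N J h B
  have hm : mConf σ = (B : ℝ) / N + 2 / N := by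
    rw [mConf, hσ]; push_cast; ring
  have hτ : 2 * tauFun J h ((B : ℝ) / N) + 4 * J / N =
      2 * tauFun J h (mConf σ) - 4 * J / N := by
    rw [hm]; unfold tauFun; ring
  rw [hτ, Real.exp_sub] at hratio
  have hx : (N : ℝ) - B - 1 = N * (1 - mConf σ + 1 / N) := by
    rw [hm]; field_simp; ring
  rw [hx] at hratio
  have hxpos : 0 < 1 - mConf σ + 1 / N := by
    have := (mConf_mem σ).2
    have : 0 < 1 / (N : ℝ) := by positivity
    linarith
  unfold edgeSecondMoment qCond
  simp only [wConf_eq, hB, hσ, Fintype.sum_prod_type, Fintype.sum_bool]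
  simp only [Bool.toNat_true, Bool.toNat_false, add_zero, h1, zero_div, zero_mul, zero_add]
  generalize 1 - mConf σ + 1 / N = x at *
  have he := Real.exp_pos (2 * tauFun J h (mConf σ))
  have he4 := Real.exp_pos (4 * J / N)
  generalize Real.exp (2 * tauFun J h (mConf σ)) = e at *
  generalize Real.exp (4 * J / N) = f at *
  have hr : spinWeight N J h B = spinWeight N J h (B + 2) * (x * f / e) := by
    field_simp at hratio ⊢
    linarith
  rw [show B + 1 + 1 = B + 2 by rfl, hr]
  generalize spinWeight N J h (B + 2) = w at *
  push_cast
  field_simp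
  ring

theorem edgeSecondMoment_false {N : ℕ} {J h : ℝ} {σ : Config N} (hw : wConf N J h σ ≠ 0)
    {u v : Fin N} (huv : u ≠ v) (hu : σ u = false) (hv : σ v = false) :
    edgeSecondMoment N J h σ u v =
      4 * (Real.exp (2 * tauFun J h (mConf σ)) /
        ((1 - mConf σ - 1 / N) * Real.exp (-(4 * J / N)) +
          Real.exp (2 * tauFun J h (mConf σ)))) := by
  obtain ⟨B, hB⟩ := exists_Msum_upd σ huv
  have hσ : Msum σ = B := by
    rw [← upd_self σ u v, hB, hu, hv]; simp
  have hle : B + 2 ≤ N := by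
    have := Msum_le (upd σ u v true true)
    rw [hB] at this
    simp at this
    omega
  have hN0 : (0 : ℝ) < N := by exact_mod_cast (by omega : 0 < N)
  have hpar : Even (N - B) := by
    rw [← hσ, ← Nat.not_odd_iff_even]
    intro hodd
    exact hw (by rw [wConf_eq, spinWeight_odd J h hodd])
  have h1 : spinWeight N J h (B + 1) = 0 := by
    apply spinWeight_odd
    obtain ⟨q, hq⟩ := hpar
    exact ⟨q - 1, by omega⟩
  have hratio := spinWeight_add_two J h hle
  have hpos := spinWeight_pos J h hpar
  have hm : mConf σ = (B : ℝ) / N := by rw [mConf, hσ]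
  rw [← hm, Real.exp_add] at hratio
  have hx : (N : ℝ) - B - 1 = N * (1 - mConf σ - 1 / N) := by
    rw [hm]; field_simp
  have hxpos : 0 < 1 - mConf σ - 1 / N := by
    have hBN : (B : ℝ) + 2 ≤ N := by exact_mod_cast hle
    have : 0 < (N : ℝ) * (1 - mConf σ - 1 / N) := by rw [← hx]; linarith
    exact pos_of_mul_pos_right this hN0.le
  rw [hx] at hratio
  unfold edgeSecondMoment qCond
  simp only [wConf_eq, hB, hσ, Fintype.sum_prod_type, Fintype.sum_bool]
  simp only [Bool.toNat_true, Bool.toNat_false, add_zero, h1, zero_div, zero_mul, zero_add]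
  rw [Real.exp_neg]
  generalize 1 - mConf σ - 1 / N = x at *
  have he := Real.exp_pos (2 * tauFun J h (mConf σ))
  have he4 := Real.exp_pos (4 * J / N)
  generalize Real.exp (2 * tauFun J h (mConf σ)) = e at *
  generalize Real.exp (4 * J / N) = f at *
  have hr : spinWeight N J h (B + 2) = spinWeight N J h B * (e * f / x) := by
    field_simp at hratio ⊢
    linarith
  rw [show B + 1 + 1 = B + 2 by rfl, hr]
  generalize spinWeight N J h B = w at *
  push_cast
  field_simp
  ring

theorem two_mul_card_edges {N : ℕ} (S : Finset (Fin N)) :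
    2 * (((cEdges N).filter fun p => p.1 ∈ S ∧ p.2 ∈ S).card : ℝ) = S.card * (S.card - 1) := by
  have h1 : S.offDiag.card = ((cEdges N).filter fun p => p.1 ∈ S ∧ p.2 ∈ S).card +
      ((cEdges N).filter fun p => p.1 ∈ S ∧ p.2 ∈ S).card := by
    rw [← Finset.card_filter_add_card_filter_not (s := S.offDiag) (fun p => p.1 < p.2)]
    congr 1
    · congr 1
      ext p
      simp only [cEdges, Finset.mem_filter, Finset.mem_offDiag, Finset.mem_univ, true_and]
      constructor
      · rintro ⟨⟨a, b, _⟩, d⟩; exact ⟨d, a, b⟩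
      · rintro ⟨d, a, b⟩; exact ⟨⟨a, b, d.ne⟩, d⟩
    · refine Finset.card_bij' (fun p _ => p.swap) (fun p _ => p.swap) ?_ ?_ ?_ ?_
      · rintro ⟨a, b⟩
        simp only [cEdges, Finset.mem_filter, Finset.mem_offDiag, Finset.mem_univ, true_and,
          Prod.swap]
        rintro ⟨⟨ha, hb, hab⟩, hlt⟩
        exact ⟨lt_of_le_of_ne (not_lt.1 hlt) hab.symm, hb, ha⟩
      · rintro ⟨a, b⟩
        simp only [cEdges, Finset.mem_filter, Finset.mem_offDiag, Finset.mem_univ, true_and,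
          Prod.swap]
        rintro ⟨hlt, ha, hb⟩
        exact ⟨⟨hb, ha, hlt.ne'⟩, hlt.le.not_gt⟩
      · intro p _; simp
      · intro p _; simp
  rw [Finset.offDiag_card] at h1
  have h2 : ((S.card * S.card - S.card : ℕ) : ℝ) = (S.card : ℝ) * S.card - S.card := by
    rw [Nat.cast_sub (Nat.le_mul_self _), Nat.cast_mul]
  have h3 := congrArg (Nat.cast : ℕ → ℝ) h1
  rw [h2, Nat.cast_add] at h3
  linarith

theorem two_mul_card_cEdges (N : ℕ) : 2 * ((cEdges N).card : ℝ) = N * (N - 1) := by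
  have := two_mul_card_edges (Finset.univ : Finset (Fin N))
  simpa using this

/-- The mean squared increment of the magnetization under one step of the dynamics. -/
noncomputable def incrementSq (N : ℕ) (J h : ℝ) (σ : Config N) : ℝ :=
  condE2 N J h (fun σ σ' => ((Msum σ : ℝ) - Msum σ') ^ 2) σ

theorem incrementSq_eq_sum {N : ℕ} (J h : ℝ) (σ : Config N) :
    incrementSq N J h σ =
      ((cEdges N).card : ℝ)⁻¹ * ∑ p ∈ cEdges N, edgeSecondMoment N J h σ p.1 p.2 := rfl

theorem incrementSq_nonneg {N : ℕ} (J h : ℝ) (σ : Config N) : 0 ≤ incrementSq N J h σ := by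
  rw [incrementSq_eq_sum]
  exact mul_nonneg (by positivity) (Finset.sum_nonneg fun p _ => edgeSecondMoment_nonneg ..)

theorem incrementSq_le {N : ℕ} (J h : ℝ) (σ : Config N) : incrementSq N J h σ ≤ 4 := by
  rw [incrementSq_eq_sum]
  have h1 : ∑ p ∈ cEdges N, edgeSecondMoment N J h σ p.1 p.2 ≤ (cEdges N).card * 4 := by
    refine (Finset.sum_le_card_nsmul _ _ 4 fun p hp => edgeSecondMoment_le J h σ ?_).trans ?_
    · exact (Finset.mem_filter.1 hp).2.ne
    · simp
  refine (mul_le_mul_of_nonneg_left h1 (by positivity)).trans ?_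
  rw [← mul_assoc]
  have := inv_mul_le_one (a := ((cEdges N).card : ℝ))
  linarith

theorem incrementSq_eq {N : ℕ} (hN : 2 ≤ N) {J h : ℝ} {σ : Config N} (hw : wConf N J h σ ≠ 0) :
    incrementSq N J h σ = 4 *
      (mConf σ * (mConf σ - 1 / N) / (1 - 1 / N) *
        ((1 - mConf σ + 1 / N) * Real.exp (4 * J / N) /
          ((1 - mConf σ + 1 / N) * Real.exp (4 * J / N) + Real.exp (2 * tauFun J h (mConf σ)))) +
      (1 - mConf σ) * (1 - mConf σ - 1 / N) / (1 - 1 / N) *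
        (Real.exp (2 * tauFun J h (mConf σ)) /
          ((1 - mConf σ - 1 / N) * Real.exp (-(4 * J / N)) +
            Real.exp (2 * tauFun J h (mConf σ))))) := by
  rw [incrementSq_eq_sum]
  set P := (1 - mConf σ + 1 / N) * Real.exp (4 * J / N) /
    ((1 - mConf σ + 1 / N) * Real.exp (4 * J / N) + Real.exp (2 * tauFun J h (mConf σ))) with hP
  set Q := Real.exp (2 * tauFun J h (mConf σ)) / ((1 - mConf σ - 1 / N) *
    Real.exp (-(4 * J / N)) + Real.exp (2 * tauFun J h (mConf σ))) with hQ
  have hterm : ∀ p ∈ cEdges N, edgeSecondMoment N J h σ p.1 p.2 =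
      4 * P * (if p.1 ∈ ASet σ ∧ p.2 ∈ ASet σ then 1 else 0) +
      4 * Q * (if p.1 ∈ (ASet σ)ᶜ ∧ p.2 ∈ (ASet σ)ᶜ then 1 else 0) := by
    intro p hp
    have hne : p.1 ≠ p.2 := (Finset.mem_filter.1 hp).2.ne
    simp only [Finset.mem_compl, ASet, Finset.mem_filter, Finset.mem_univ, true_and]
    rcases hu : σ p.1 with _ | _ <;> rcases hv : σ p.2 with _ | _
    · rw [edgeSecondMoment_false hw hne hu hv]; simp [hQ]
    · rw [edgeSecondMoment_of_ne hw (by simp [hu, hv])]; simp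
    · rw [edgeSecondMoment_of_ne hw (by simp [hu, hv])]; simp
    · rw [edgeSecondMoment_true hw hne hu hv]; simp [hP]
  rw [Finset.sum_congr rfl hterm, Finset.sum_add_distrib, ← Finset.mul_sum, ← Finset.mul_sum,
    Finset.sum_boole, Finset.sum_boole]
  have c0 := two_mul_card_cEdges N
  have c1 := two_mul_card_edges (ASet σ)
  have c2 := two_mul_card_edges (ASet σ)ᶜ
  have hle := Msum_le σ
  have hcc : (((ASet σ)ᶜ.card : ℕ) : ℝ) = (N : ℝ) - Msum σ := by
    rw [Finset.card_compl, Fintype.card_fin, ← Nat.cast_sub hle]; rfl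
  rw [hcc] at c2
  have hM : ((ASet σ).card : ℝ) = Msum σ := rfl
  rw [hM] at c1
  have hN2 : (2 : ℝ) ≤ N := by exact_mod_cast hN
  have hN1 : (N : ℝ) - 1 ≠ 0 := by linarith
  have hN0 : (N : ℝ) ≠ 0 := by linarith
  rw [show ((cEdges N).card : ℝ) = N * (N - 1) / 2 by linarith,
    eq_div_of_mul_eq two_ne_zero ((mul_comm _ _).trans c1),
    eq_div_of_mul_eq two_ne_zero ((mul_comm _ _).trans c2)]
  clear_value P Q
  unfold mConf
  field_simp

theorem abs_div_add_sub_div_add_le {x y e : ℝ} (hx : 0 ≤ x) (hy : 0 ≤ y) (he : 0 < e) :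
    |x / (x + e) - y / (y + e)| ≤ |x - y| / e := by
  have h1 : x / (x + e) - y / (y + e) = e * (x - y) / ((x + e) * (y + e)) := by
    field_simp
    ring
  rw [h1, abs_div, abs_mul, abs_of_pos he, abs_of_pos (show 0 < (x + e) * (y + e) by positivity),
    div_le_div_iff₀ (by positivity) he]
  have : e * e ≤ (x + e) * (y + e) := by gcongr <;> linarith
  nlinarith [mul_le_mul_of_nonneg_left this (abs_nonneg (x - y))]

theorem exp_sub_one_le_mul_exp (a : ℝ) : Real.exp a - 1 ≤ a * Real.exp a := by
  have h1 := Real.one_sub_le_exp_neg a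
  have h2 := mul_le_mul_of_nonneg_left h1 (Real.exp_pos a).le
  rw [← Real.exp_add] at h2
  simp at h2
  linarith

/-- A lower bound for `exp (2 * tauFun J h m)` over `m ∈ [0, 1]`. -/
noncomputable def expTauLower (J h : ℝ) : ℝ := Real.exp (2 * (h - J))

theorem expTauLower_le {J h m : ℝ} (hJ : 0 ≤ J) (hm : 0 ≤ m) :
    expTauLower J h ≤ Real.exp (2 * tauFun J h m) := by
  unfold expTauLower tauFun
  gcongr
  nlinarith [mul_nonneg hm hJ]

theorem abs_weighted_sub_le {A a P p ε c : ℝ} (hA : |A - a| ≤ ε) (ha : |a| ≤ 1) (hP : |P| ≤ 1)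
    (hPp : |P - p| ≤ c) : |A * P - a * p| ≤ ε + c := by
  rw [show A * P - a * p = (A - a) * P + a * (P - p) by ring]
  refine (abs_add_le _ _).trans ?_
  rw [abs_mul, abs_mul]
  have h1 : |A - a| * |P| ≤ ε * 1 := by
    gcongr
    exact (abs_nonneg _).trans hA
  have h2 : |a| * |P - p| ≤ 1 * c := by gcongr
  linarith

theorem Ltwo_eq {J h m : ℝ} (hm : m ≤ 1) :
    Ltwo J h m = 4 * (m ^ 2 * ((1 - m) / ((1 - m) + Real.exp (2 * tauFun J h m))) +
      (1 - m) ^ 2 *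
        (Real.exp (2 * tauFun J h m) / ((1 - m) + Real.exp (2 * tauFun J h m)))) := by
  have he := Real.exp_pos (2 * tauFun J h m)
  have : 0 < (1 - m) + Real.exp (2 * tauFun J h m) := by linarith
  unfold Ltwo
  field_simp

theorem abs_correctedSq_sub_le {m ε : ℝ} (hm : m ∈ Set.Icc (0 : ℝ) 1) (hε : 0 ≤ ε)
    (hε2 : ε ≤ 1 / 2) : |m * (m - ε) / (1 - ε) - m ^ 2| ≤ ε := by
  have h1 : 0 < 1 - ε := by linarith
  have e : m * (m - ε) / (1 - ε) - m ^ 2 = -(ε * (m * (1 - m))) / (1 - ε) := by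
    field_simp
    ring
  have h2 : 0 ≤ m * (1 - m) := mul_nonneg hm.1 (sub_nonneg.2 hm.2)
  rw [e, abs_div, abs_neg, abs_of_pos h1, abs_of_nonneg (mul_nonneg hε h2), div_le_iff₀ h1]
  have h3 : m * (1 - m) ≤ 1 / 4 := by nlinarith [sq_nonneg (m - 1 / 2)]
  nlinarith

theorem abs_incrementSq_sub_Ltwo_le {N : ℕ} (hN : 2 ≤ N) {J h : ℝ} (hJ : 0 ≤ J)
    {σ : Config N} (hw : wConf N J h σ ≠ 0) :
    |incrementSq N J h σ - Ltwo J h (mConf σ)| ≤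
      8 * (1 + (4 * J + 1) * Real.exp (4 * J) / expTauLower J h) / N := by
  have hm := mConf_mem σ
  have hN2 : (2 : ℝ) ≤ N := by exact_mod_cast hN
  have hε : (0 : ℝ) < 1 / N := by positivity
  have hε2 : (1 : ℝ) / N ≤ 1 / 2 := by gcongr
  have he0 : 0 < expTauLower J h := Real.exp_pos _
  have hel := expTauLower_le (h := h) hJ hm.1
  have hcase : mConf σ = 1 ∨ 0 ≤ 1 - mConf σ - 1 / N := by
    have hN0 : (0 : ℝ) < N := by linarith
    rcases (Msum_le σ).eq_or_lt with h1 | h1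
    · left; rw [mConf, h1]; field_simp
    · right
      have : (Msum σ : ℝ) + 1 ≤ N := by exact_mod_cast h1
      rw [mConf, sub_sub, ← add_div, sub_nonneg]
      exact div_le_one_of_le₀ this hN0.le
  rw [incrementSq_eq hN hw, Ltwo_eq hm.2, ← mul_sub, abs_mul, abs_of_pos (by norm_num : (0:ℝ) < 4)]
  have h4 : 4 * J / (N : ℝ) = 4 * J * (1 / N) := by ring
  rw [h4, div_eq_mul_one_div (8 * _) (N : ℝ)]
  generalize (1 : ℝ) / N = ε at *
  generalize mConf σ = m at *
  generalize expTauLower J h = e₀ at *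
  generalize Real.exp (2 * tauFun J h m) = e at *
  have he : 0 < e := he0.trans_le hel
  have hy : 0 ≤ 1 - m := sub_nonneg.2 hm.2
  have hεJ : 4 * J * ε ≤ 4 * J := by nlinarith
  have hf1 : Real.exp (4 * J * ε) ≤ Real.exp (4 * J) := Real.exp_le_exp.2 hεJ
  have hf2 := exp_sub_one_le_mul_exp (4 * J * ε)
  have hf3 : 1 ≤ Real.exp (4 * J * ε) := Real.one_le_exp (by positivity)
  have hf4 := Real.one_sub_le_exp_neg (4 * J * ε)
  have hf5 : Real.exp (-(4 * J * ε)) ≤ 1 := Real.exp_le_one_iff.2 (by simp; positivity)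
  have hf6 := Real.exp_pos (-(4 * J * ε))
  have hE1 : 1 ≤ Real.exp (4 * J) := Real.one_le_exp (by positivity)
  have hdist : ∀ x : ℝ, 0 ≤ x → |x - (1 - m)| ≤ ε * ((4 * J + 1) * Real.exp (4 * J)) →
      |x / (x + e) - (1 - m) / ((1 - m) + e)| ≤
        ε * ((4 * J + 1) * Real.exp (4 * J) / e₀) := by
    intro x hx hxd
    refine (abs_div_add_sub_div_add_le hx hy he).trans ?_
    rw [← mul_div_assoc]
    exact div_le_div₀ (by positivity) hxd he0 hel
  have hunit : ∀ x : ℝ, 0 ≤ x → |x / (x + e)| ≤ 1 ∧ |e / (x + e)| ≤ 1 := by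
    intro x hx
    constructor
    · rw [abs_of_nonneg (by positivity)]
      exact div_le_one_of_le₀ (by linarith) (by linarith)
    · rw [abs_of_nonneg (by positivity)]
      exact div_le_one_of_le₀ (by linarith) (by linarith)
  have hx0 : 0 ≤ (1 - m + ε) * Real.exp (4 * J * ε) := by positivity
  have b1 : |m * (m - ε) / (1 - ε) * ((1 - m + ε) * Real.exp (4 * J * ε) /
        ((1 - m + ε) * Real.exp (4 * J * ε) + e)) - m ^ 2 * ((1 - m) / (1 - m + e))| ≤
      ε + ε * ((4 * J + 1) * Real.exp (4 * J) / e₀) := by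
    refine abs_weighted_sub_le (abs_correctedSq_sub_le hm hε.le hε2) ?_ (hunit _ hx0).1
      (hdist _ hx0 ?_)
    · rw [abs_of_nonneg (sq_nonneg m)]
      exact pow_le_one₀ hm.1 hm.2
    · rw [show (1 - m + ε) * Real.exp (4 * J * ε) - (1 - m) =
        (1 - m) * (Real.exp (4 * J * ε) - 1) + ε * Real.exp (4 * J * ε) by ring,
        abs_of_nonneg (add_nonneg (mul_nonneg hy (by linarith)) (by positivity))]
      have t1 : (1 - m) * (Real.exp (4 * J * ε) - 1) ≤ 1 * (4 * J * ε * Real.exp (4 * J)) := by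
        gcongr
        · linarith [hm.1]
        · exact hf2.trans (by gcongr)
      have t2 : ε * Real.exp (4 * J * ε) ≤ ε * Real.exp (4 * J) := by gcongr
      linarith
  have b2 : |(1 - m) * (1 - m - ε) / (1 - ε) * (e /
        ((1 - m - ε) * Real.exp (-(4 * J * ε)) + e)) - (1 - m) ^ 2 * (e / (1 - m + e))| ≤
      ε + ε * ((4 * J + 1) * Real.exp (4 * J) / e₀) := by
    rcases hcase with rfl | hz
    · simp
      positivity
    · have hz0 : 0 ≤ (1 - m - ε) * Real.exp (-(4 * J * ε)) := by positivity
      have hm' : 1 - m ∈ Set.Icc (0 : ℝ) 1 := ⟨hy, by linarith [hm.1]⟩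
      refine abs_weighted_sub_le (abs_correctedSq_sub_le hm' hε.le hε2) ?_ (hunit _ hz0).2 ?_
      · rw [abs_of_nonneg (sq_nonneg _)]
        exact pow_le_one₀ hm'.1 hm'.2
      · have hcompl : ∀ x : ℝ, 0 ≤ x → e / (x + e) = 1 - x / (x + e) := by
          intro x hx
          field_simp
          ring
        rw [hcompl _ hz0, hcompl _ hy, sub_sub_sub_cancel_left, abs_sub_comm]
        refine hdist _ hz0 ?_
        rw [show (1 - m - ε) * Real.exp (-(4 * J * ε)) - (1 - m) =
          -((1 - m) * (1 - Real.exp (-(4 * J * ε))) + ε * Real.exp (-(4 * J * ε))) by ring,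
          abs_neg, abs_of_nonneg (add_nonneg (mul_nonneg hy (by linarith)) (by positivity))]
        have t1 : (1 - m) * (1 - Real.exp (-(4 * J * ε))) ≤ 1 * (4 * J * ε) := by
          gcongr
          · linarith [hm.1]
          · linarith
        have t2 : ε * Real.exp (-(4 * J * ε)) ≤ ε * 1 := by gcongr
        have t3 : ε * (4 * J + 1) * 1 ≤ ε * (4 * J + 1) * Real.exp (4 * J) := by gcongr
        linarith
  rw [add_sub_add_comm]
  have b3 := (abs_add_le _ _).trans (add_le_add b1 b2)
  linarith

/-! ### Local behaviour at the maximizer -/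

theorem exists_mul_pow_le_of_iteratedDeriv {f : ℝ → ℝ} {s : Set ℝ} {x₀ : ℝ} {k : ℕ}
    (hs : Convex ℝ s) (hso : IsOpen s) (hx₀ : x₀ ∈ s) (hf : ContDiffOn ℝ (2 * k + 1 : ℕ) f s)
    (h0 : ∀ l ≤ 2 * k, iteratedDeriv l f x₀ = 0) (hpos : 0 < iteratedDeriv (2 * k + 1) f x₀) :
    ∃ c > 0, ∃ δ > 0, ∀ x, |x - x₀| < δ → c * (x - x₀) ^ (2 * k + 2) ≤ f x * (x - x₀) := by
  have hT := taylor_isLittleO hs hx₀ hf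
  rw [hso.nhdsWithin_eq hx₀] at hT
  set A := ((2 * k + 1).factorial : ℝ)⁻¹ * iteratedDeriv (2 * k + 1) f x₀ with hA
  have hApos : 0 < A := by positivity
  have hTaylor : ∀ x, taylorWithinEval f (2 * k + 1) s x₀ x = A * (x - x₀) ^ (2 * k + 1) := by
    intro x
    rw [taylor_within_apply, Finset.sum_range_succ, Finset.sum_eq_zero]
    · rw [iteratedDerivWithin_of_isOpen hso hx₀, smul_eq_mul, hA]
      ring
    · intro l hl
      rw [iteratedDerivWithin_of_isOpen hso hx₀, h0 l (by have := Finset.mem_range.1 hl; omega),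
        smul_zero]
  obtain ⟨δ, hδ, hball⟩ := Metric.eventually_nhds_iff.1 (hT.def (half_pos hApos))
  refine ⟨A / 2, half_pos hApos, δ, hδ, fun x hx => ?_⟩
  have h1 := hball (y := x) (by rwa [Real.dist_eq])
  rw [hTaylor, Real.norm_eq_abs, Real.norm_eq_abs] at h1
  generalize x - x₀ = y at *
  have h2 : |(f x - A * y ^ (2 * k + 1)) * y| ≤ A / 2 * y ^ (2 * k + 2) := by
    rw [abs_mul]
    refine (mul_le_mul_of_nonneg_right h1 (abs_nonneg y)).trans (le_of_eq ?_)
    rw [mul_assoc, ← abs_mul, ← pow_succ, abs_of_nonneg (Even.pow_nonneg ⟨k + 1, by ring⟩ y)]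
  have h3 := (abs_le.1 h2).1
  have h4 : A * y ^ (2 * k + 1) * y = A * y ^ (2 * k + 2) := by ring
  linarith

theorem contDiff_exp_tau (J h : ℝ) {n : WithTop ℕ∞} :
    ContDiff ℝ n fun m => Real.exp (2 * tauFun J h m) := by
  unfold tauFun
  fun_prop

theorem contDiffOn_Lone (J h : ℝ) {n : WithTop ℕ∞} :
    ContDiffOn ℝ n (Lone J h) (Set.Iic 1) := by
  have he := contDiff_exp_tau J h (n := n)
  unfold Lone
  refine ContDiffOn.div (ContDiff.contDiffOn (by fun_prop)) (ContDiff.contDiffOn (by fun_prop)) ?_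
  intro m hm
  have := Real.exp_pos (2 * tauFun J h m)
  have := Set.mem_Iic.1 hm
  linarith

theorem contDiffOn_Ltwo (J h : ℝ) {n : WithTop ℕ∞} :
    ContDiffOn ℝ n (Ltwo J h) (Set.Iic 1) := by
  have he := contDiff_exp_tau J h (n := n)
  unfold Ltwo
  refine ContDiffOn.div (ContDiff.contDiffOn (by fun_prop)) (ContDiff.contDiffOn (by fun_prop)) ?_
  intro m hm
  have := Real.exp_pos (2 * tauFun J h m)
  have := Set.mem_Iic.1 hm
  linarith

theorem exists_Ltwo_lipschitz (J h : ℝ) :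
    ∃ L : ℝ, 0 ≤ L ∧ ∀ x ∈ Set.Icc (0 : ℝ) 1, ∀ y ∈ Set.Icc (0 : ℝ) 1,
      |Ltwo J h x - Ltwo J h y| ≤ L * |x - y| := by
  have hC : ContDiffOn ℝ 1 (Ltwo J h) (Set.Icc 0 1) :=
    (contDiffOn_Ltwo J h).mono Set.Icc_subset_Iic_self
  obtain ⟨L, hL⟩ := (hC.locallyLipschitzOn (convex_Icc 0 1)).exists_lipschitzOnWith_of_compact
    isCompact_Icc
  refine ⟨L, L.2, fun x hx y hy => ?_⟩
  simpa [Real.dist_eq] using hL.dist_le_mul x hx y hy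

theorem deriv_Lone_one (J h : ℝ) : deriv (Lone J h) 1 < 0 := by
  set ρ : ℝ → ℝ := fun m => 2 * (m ^ 2 - (1 - m) * Real.exp (2 * tauFun J h m)) /
    ((1 - m) + Real.exp (2 * tauFun J h m)) with hρ
  have hE := Real.exp_pos (2 * tauFun J h 1)
  have hd : DifferentiableAt ℝ ρ 1 := by
    have he : Differentiable ℝ fun m => Real.exp (2 * tauFun J h m) :=
      (contDiff_exp_tau J h (n := 1)).differentiable (by norm_num)
    refine DifferentiableAt.div (by fun_prop) (by fun_prop) ?_
    simp
  have hprod := ((hasDerivAt_id (1 : ℝ)).const_sub 1).mul hd.hasDerivAt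
  have hfun : Lone J h = (fun m => 1 - id m) * ρ := by
    funext m
    simp only [Lone, hρ, Pi.mul_apply, id]
    ring
  rw [hfun, hprod.deriv]
  have : 0 < ρ 1 := by
    simp only [hρ]
    simp
    exact hE
  simp
  exact this


/-- The drift `m² - (1-m) e^{2τ(m)}`, whose sign is the sign of `L₁` on `[0,1)`. -/
noncomputable def drift (J h m : ℝ) : ℝ := m ^ 2 - (1 - m) * Real.exp (2 * tauFun J h m)

theorem exp_tau_le {J h m : ℝ} (hJ : 0 ≤ J) (hm : m ≤ 1) :
    Real.exp (2 * tauFun J h m) ≤ Real.exp (2 * (J + h)) := by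
  apply Real.exp_le_exp.2
  unfold tauFun
  nlinarith

theorem EConf_drift_mul_le {J h m₀ : ℝ} (hJ : 0 ≤ J) (hm₀ : m₀ ∈ Set.Icc (0 : ℝ) 1) {N : ℕ}
    (hN : 1 ≤ N) :
    EConf N J h (fun σ => drift J h (mConf σ) * (mConf σ - m₀)) ≤
      (3 + 4 * J * Real.exp (4 * J) * Real.exp (2 * (J + h))) / N := by
  have hN' : (1 : ℝ) ≤ N := by exact_mod_cast hN
  have hbal := EConf_balance hN J h (fun y => y - m₀)
  have hle := EConf_mono (N := N) (J := J) (h := h)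
    (f := fun σ => drift J h (mConf σ) * (mConf σ - m₀) +
      (1 - mConf σ) * Real.exp (2 * tauFun J h (mConf σ) + 4 * J / N) * (mConf σ - m₀))
    (g := fun σ => mConf σ * (mConf σ - 1 / N) * (mConf σ - 2 / N - m₀) +
      (3 + 4 * J * Real.exp (4 * J) * Real.exp (2 * (J + h))) / N) (by
    intro σ _
    obtain ⟨hm0, hm1⟩ := mConf_mem σ
    obtain ⟨h0, h1⟩ := hm₀
    have hexp := exp_tau_le (h := h) hJ hm1
    set m := mConf σ
    set T := Real.exp (2 * tauFun J h m)
    have hT : 0 < T := Real.exp_pos _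
    set ε : ℝ := 1 / N with hε
    have hε0 : 0 ≤ ε := by positivity
    have hε1 : ε ≤ 1 := by rw [hε, div_le_one (by linarith)]; exact hN'
    have e1 : (2 : ℝ) / N = 2 * ε := by rw [hε]; ring
    have e2 : 4 * J / N = 4 * J * ε := by rw [hε]; ring
    have e3 : (3 + 4 * J * Real.exp (4 * J) * Real.exp (2 * (J + h))) / N =
      3 * ε + 4 * J * ε * Real.exp (4 * J) * Real.exp (2 * (J + h)) := by rw [hε]; ring
    have hJε : 4 * J * ε ≤ 4 * J := by nlinarith
    have hJε0 : 0 ≤ 4 * J * ε := by positivity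
    simp only [drift]
    rw [e1, e2, e3, Real.exp_add]
    set D := Real.exp (4 * J * ε) - 1 with hD
    have hD0 : 0 ≤ D := by have := Real.add_one_le_exp (4 * J * ε); linarith
    have hD1 : D ≤ 4 * J * ε * Real.exp (4 * J) :=
      (exp_sub_one_le_mul_exp _).trans
        (mul_le_mul_of_nonneg_left (Real.exp_le_exp.2 hJε) hJε0)
    have hDT : D * T ≤ 4 * J * ε * Real.exp (4 * J) * Real.exp (2 * (J + h)) :=
      mul_le_mul hD1 hexp hT.le (hD0.trans hD1)
    have hDT0 : 0 ≤ D * T := mul_nonneg hD0 hT.le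
    have hw : (1 - m) * (m - m₀) ≤ 1 := by nlinarith
    have hR : (1 - m) * (m - m₀) * (D * T) ≤ D * T := by nlinarith
    have hS : 2 * ε * m ^ 2 + ε * m * (m - m₀) - 2 * ε ^ 2 * m ≤ 3 * ε := by
      have : m ^ 2 ≤ 1 := by nlinarith
      have h2 : m * (m - m₀) ≤ 1 := by nlinarith
      have h3 : 0 ≤ 2 * ε ^ 2 * m := by positivity
      nlinarith
    have hE : Real.exp (4 * J * ε) = D + 1 := by rw [hD]; ring
    rw [hE]
    linear_combination hS + hR + hDT)
  rw [EConf_add, EConf_add, EConf_const, hbal] at hle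
  linarith

theorem abs_drift_le {J h m : ℝ} (hJ : 0 ≤ J) (hm : m ∈ Set.Icc (0 : ℝ) 1) :
    |drift J h m| ≤ 1 + Real.exp (2 * (J + h)) := by
  obtain ⟨hm0, hm1⟩ := hm
  have hexp := exp_tau_le (h := h) hJ hm1
  have hpos := Real.exp_pos (2 * tauFun J h m)
  unfold drift
  rw [abs_le]
  constructor <;> nlinarith

theorem Lone_eq_mul_drift (J h m : ℝ) :
    Lone J h m = 2 * ((1 - m) / ((1 - m) + Real.exp (2 * tauFun J h m))) * drift J h m := by
  unfold Lone drift
  ring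

/-- If `L₁` grows like an odd power at `m₀`, then `E (m - m₀)^{2k+2} = O(1/N)`. -/
theorem EConf_pow_le {J h m₀ c δ : ℝ} {k : ℕ} (hJ : 0 ≤ J) (hm₀ : m₀ ∈ Set.Icc (0 : ℝ) 1)
    (hlt : m₀ < 1)
    (hmax : ∀ m ∈ Set.Icc (0 : ℝ) 1, m ≠ m₀ → freeEnergy J h m < freeEnergy J h m₀)
    (hc : 0 < c) (hδ : 0 < δ)
    (hgrowth : ∀ m, |m - m₀| < δ → c * (m - m₀) ^ (2 * k + 2) ≤ Lone J h m * (m - m₀)) :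
    ∃ C, 0 ≤ C ∧ ∃ N₀ : ℕ, ∀ N, N₀ ≤ N → 1 ≤ N →
      EConf N J h (fun σ => (mConf σ - m₀) ^ (2 * k + 2)) ≤ C / N := by
  set η := min δ (1 - m₀) with hη
  have hη0 : 0 < η := lt_min hδ (by linarith)
  obtain ⟨C₁, hC₁, N₀, hfar⟩ := EConf_far_le hm₀ hmax hη0
  set B := c / 2 + (1 + Real.exp (2 * (J + h))) with hB
  set A := 3 + 4 * J * Real.exp (4 * J) * Real.exp (2 * (J + h)) with hA
  refine ⟨2 / c * (A + B * C₁), by positivity, N₀, fun N hN₀ hN => ?_⟩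
  have hle := EConf_mono (N := N) (J := J) (h := h)
    (f := fun σ => c / 2 * (mConf σ - m₀) ^ (2 * k + 2))
    (g := fun σ => drift J h (mConf σ) * (mConf σ - m₀) +
      B * (if η ≤ |mConf σ - m₀| then 1 else 0)) (by
    intro σ _
    have hm := mConf_mem σ
    set m := mConf σ
    have habs : |m - m₀| ≤ 1 := abs_le.2 ⟨by linarith [hm.1, hm₀.2], by linarith [hm.2, hm₀.1]⟩
    split_ifs with hcase
    · have h1 : (m - m₀) ^ (2 * k + 2) ≤ 1 := by
        rw [← Even.pow_abs (by simp [parity_simps])]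
        exact pow_le_one₀ (abs_nonneg _) habs
      have h2 : |drift J h m * (m - m₀)| ≤ (1 + Real.exp (2 * (J + h))) * 1 := by
        rw [abs_mul]
        exact mul_le_mul (abs_drift_le hJ hm) habs (abs_nonneg _) (by positivity)
      have h3 := (abs_le.1 h2).1
      have h4 := mul_le_mul_of_nonneg_left h1 (half_pos hc).le
      linarith
    · push Not at hcase
      have hg := hgrowth m (hcase.trans_le (min_le_left _ _))
      have hm1 : m < 1 := by
        have := (abs_lt.1 (hcase.trans_le (min_le_right _ _))).2
        linarith
      have hpow : 0 ≤ c * (m - m₀) ^ (2 * k + 2) :=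
        mul_nonneg hc.le (Even.pow_nonneg (by simp [parity_simps]) _)
      rw [Lone_eq_mul_drift] at hg
      have hT := Real.exp_pos (2 * tauFun J h m)
      set r := (1 - m) / ((1 - m) + Real.exp (2 * tauFun J h m)) with hr
      have hr0 : 0 < r := div_pos (by linarith) (by linarith)
      have hr1 : r ≤ 1 := (div_le_one (by linarith)).2 (by linarith)
      have hd : 0 ≤ drift J h m * (m - m₀) := by
        by_contra hneg
        push Not at hneg
        nlinarith [mul_neg_of_pos_of_neg hr0 hneg]
      nlinarith)
  rw [EConf_const_mul, EConf_add, EConf_const_mul] at hle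
  have hdrift := EConf_drift_mul_le (h := h) hJ hm₀ hN
  have hB0 : 0 ≤ B := by positivity
  have hfar' := mul_le_mul_of_nonneg_left (hfar N hN₀ hN) hB0
  have hfin : c / 2 * EConf N J h (fun σ => (mConf σ - m₀) ^ (2 * k + 2)) ≤
      (A + B * C₁) / N := by
    rw [add_div, mul_div_assoc]
    linarith
  have hmul := mul_le_mul_of_nonneg_left hfin (by positivity : 0 ≤ 2 / c)
  have hcancel : 2 / c * (c / 2) = 1 := by field_simp
  rwa [← mul_assoc, hcancel, one_mul, ← mul_div_assoc] at hmul

theorem abs_le_add_pow_div {x r : ℝ} (hr : 0 < r) (k : ℕ) :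
    |x| ≤ r + x ^ (2 * k + 2) / r ^ (2 * k + 1) := by
  have hev : x ^ (2 * k + 2) = |x| ^ (2 * k + 2) :=
    (Even.pow_abs (by simp [parity_simps]) x).symm
  rw [hev]
  rcases le_total |x| r with hx | hx
  · have : 0 ≤ |x| ^ (2 * k + 2) / r ^ (2 * k + 1) := by positivity
    linarith
  · have h1 : r ^ (2 * k + 1) ≤ |x| ^ (2 * k + 1) := pow_le_pow_left₀ hr.le hx _
    have h2 : |x| ≤ |x| ^ (2 * k + 2) / r ^ (2 * k + 1) := by
      rw [le_div_iff₀ (by positivity), pow_succ' _ (2 * k + 1)]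
      exact mul_le_mul_of_nonneg_left h1 (abs_nonneg _)
    linarith

theorem EConf_abs_le {N k : ℕ} (hN : 1 ≤ N) {J h m₀ C : ℝ}
    (hC : EConf N J h (fun σ => (mConf σ - m₀) ^ (2 * k + 2)) ≤ C / N) :
    EConf N J h (fun σ => |mConf σ - m₀|) ≤
      (1 + C) * (N : ℝ) ^ (-(1 : ℝ) / (2 * (k : ℝ) + 2)) := by
  have hN0 : (0 : ℝ) < N := by exact_mod_cast hN
  set r := (N : ℝ) ^ (-(1 : ℝ) / (2 * (k : ℝ) + 2)) with hr
  have hr0 : 0 < r := Real.rpow_pos_of_pos hN0 _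
  have hrpow : r ^ (2 * k + 2) = (N : ℝ)⁻¹ := by
    rw [hr, ← Real.rpow_natCast, ← Real.rpow_mul hN0.le, ← Real.rpow_neg_one]
    congr 1
    push_cast
    field_simp
  have hle := EConf_mono (N := N) (J := J) (h := h) (f := fun σ => |mConf σ - m₀|)
    (g := fun σ => r + (r ^ (2 * k + 1))⁻¹ * (mConf σ - m₀) ^ (2 * k + 2))
    (fun σ _ => (abs_le_add_pow_div hr0 k).trans_eq (by ring))
  rw [EConf_add, EConf_const, EConf_const_mul] at hle
  have h1 := mul_le_mul_of_nonneg_left hC (by positivity : 0 ≤ (r ^ (2 * k + 1))⁻¹)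
  have h2 : (r ^ (2 * k + 1))⁻¹ * (C / N) = C * r := by
    rw [div_eq_mul_inv, ← hrpow, pow_succ' _ (2 * k + 1)]
    field_simp
  linarith

theorem lt_one_of_iteratedDeriv_Lone {J h m₀ : ℝ} (hm₀ : m₀ ≤ 1) {k : ℕ}
    (hder0 : ∀ l : ℕ, l ≤ 2 * k → iteratedDeriv l (Lone J h) m₀ = 0)
    (hderpos : 0 < iteratedDeriv (2 * k + 1) (Lone J h) m₀) : m₀ < 1 := by
  refine lt_of_le_of_ne hm₀ fun heq => ?_
  subst heq
  have hneg := deriv_Lone_one J h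
  rw [← iteratedDeriv_one] at hneg
  rcases Nat.eq_zero_or_pos k with rfl | hk
  · simp only [mul_zero, zero_add] at hderpos
    exact lt_asymm hneg hderpos
  · exact hneg.ne (hder0 1 (by omega))

theorem Ltwo_pos {J h m : ℝ} (hm : m < 1) : 0 < Ltwo J h m := by
  have hT := Real.exp_pos (2 * tauFun J h m)
  have hm' : 0 < 1 - m := by linarith
  unfold Ltwo
  positivity

theorem condE2_rescaled {N : ℕ} (hN : 1 ≤ N) (J h m₀ L : ℝ) (k : ℕ) (σ : Config N) :
    2 * (N : ℝ) ^ ((2 * (k : ℝ) + 1) / ((k : ℝ) + 1)) / L / 2 *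
      condE2 N J h (fun σ σ' =>
        (((Msum σ : ℝ) - N * m₀) / (N : ℝ) ^ ((2 * (k : ℝ) + 1) / (2 * (k : ℝ) + 2)) -
          ((Msum σ' : ℝ) - N * m₀) / (N : ℝ) ^ ((2 * (k : ℝ) + 1) / (2 * (k : ℝ) + 2))) ^ 2) σ =
      incrementSq N J h σ / L := by
  have hN0 : (0 : ℝ) < N := by exact_mod_cast hN
  set s := (N : ℝ) ^ ((2 * (k : ℝ) + 1) / (2 * (k : ℝ) + 2)) with hs
  have hs0 : 0 < s := Real.rpow_pos_of_pos hN0 _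
  have hsq : (N : ℝ) ^ ((2 * (k : ℝ) + 1) / ((k : ℝ) + 1)) = s ^ 2 := by
    rw [hs, ← Real.rpow_natCast, ← Real.rpow_mul hN0.le]
    congr 1
    push_cast
    field_simp
  have hcond : condE2 N J h (fun σ σ' =>
      (((Msum σ : ℝ) - N * m₀) / s - ((Msum σ' : ℝ) - N * m₀) / s) ^ 2) σ =
      (s ^ 2)⁻¹ * incrementSq N J h σ := by
    unfold incrementSq condE2
    rw [mul_left_comm]
    congr 1
    simp only [Finset.mul_sum]
    refine Finset.sum_congr rfl fun p _ => Finset.sum_congr rfl fun st _ => ?_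
    rw [← sub_div, div_pow]
    ring
  rw [hcond, hsq]
  field_simp

/-- Control of the conditional second moment in Stein's method: with
`W = (M - N m₀)/N^{(2k+1)/(2k+2)}` and `c₀ = 2 N^{(2k+1)/(k+1)}/L₂(m₀)`,
`E|1 - (c₀/2) E[(W - W')² | W]| ≤ K (N^{-1/(2k+2)} + N^{-1})`. -/
theorem stmt8 (J h : ℝ) (hJ : 0 ≤ J) (k : ℕ) (hk : k = 0 ∨ k = 1)
    (m₀ : ℝ) (hm₀ : m₀ ∈ Set.Icc (0:ℝ) 1)
    (hmax : ∀ m ∈ Set.Icc (0:ℝ) 1, ptilde J h m ≤ ptilde J h m₀)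
    (huniq : ∀ m ∈ Set.Icc (0:ℝ) 1, ptilde J h m = ptilde J h m₀ → m = m₀)
    (hder0 : ∀ l : ℕ, l ≤ 2*k → iteratedDeriv l (Lone J h) m₀ = 0)
    (hderpos : 0 < iteratedDeriv (2*k+1) (Lone J h) m₀) :
    ∃ K : ℝ, ∀ N : ℕ, 1 ≤ N →
      let W : Config N → ℝ :=
        fun σ => ((Msum σ : ℝ) - N * m₀) / (N:ℝ) ^ ((2*(k:ℝ)+1)/(2*(k:ℝ)+2))
      let c₀ : ℝ := 2 * (N:ℝ) ^ ((2*(k:ℝ)+1)/((k:ℝ)+1)) / Ltwo J h m₀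
      EConf N J h
          (fun σ => |1 - c₀ / 2 * condE2 N J h (fun σ σ' => (W σ - W σ')^2) σ|)
        ≤ K * ((N:ℝ) ^ (-(1:ℝ)/(2*(k:ℝ)+2)) + (N:ℝ)⁻¹) := by
  have hlt := lt_one_of_iteratedDeriv_Lone hm₀.2 hder0 hderpos
  have hL := Ltwo_pos (J := J) (h := h) hlt
  have hcrit : m₀ ^ 2 = (1 - m₀) * Real.exp (2 * tauFun J h m₀) := by
    have h0 := hder0 0 (Nat.zero_le _)
    rw [iteratedDeriv_zero, Lone_eq_mul_drift] at h0
    have hT := Real.exp_pos (2 * tauFun J h m₀)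
    have hr : (1 - m₀) / ((1 - m₀) + Real.exp (2 * tauFun J h m₀)) ≠ 0 :=
      (div_pos (by linarith) (by linarith)).ne'
    exact sub_eq_zero.1 ((mul_eq_zero.1 h0).resolve_left (mul_ne_zero two_ne_zero hr))
  have hfree : ∀ m ∈ Set.Icc (0 : ℝ) 1, m ≠ m₀ → freeEnergy J h m < freeEnergy J h m₀ := by
    intro m hm hne
    rw [freeEnergy_eq_ptilde hm₀.1 hcrit]
    exact (freeEnergy_le_ptilde J h hm).trans_lt
      (lt_of_le_of_ne (hmax m hm) fun heq => hne (huniq m hm heq))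
  obtain ⟨c, hc, δ, hδ, hgrowth⟩ := exists_mul_pow_le_of_iteratedDeriv (convex_Iio (1 : ℝ))
    isOpen_Iio hlt ((contDiffOn_Lone J h).mono Set.Iio_subset_Iic_self) hder0 hderpos
  obtain ⟨C, hC, N₀, hpow⟩ := EConf_pow_le hJ hm₀ hlt hfree hc hδ hgrowth
  obtain ⟨Λ, hΛ, hLip⟩ := exists_Ltwo_lipschitz J h
  set B := 8 * (1 + (4 * J + 1) * Real.exp (4 * J) / expTauLower J h) with hB
  have hB0 : 0 ≤ B := by
    have : 0 < expTauLower J h := Real.exp_pos _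
    positivity
  set L := Ltwo J h m₀
  refine ⟨(B + Λ * (1 + C)) / L + (1 + 4 / L) * (max 2 N₀ : ℕ), fun N hN => ?_⟩
  simp only [condE2_rescaled hN]
  have hN0 : (0 : ℝ) < N := by exact_mod_cast hN
  set r := (N : ℝ) ^ (-(1 : ℝ) / (2 * (k : ℝ) + 2)) with hr
  have hr0 : 0 < r := Real.rpow_pos_of_pos hN0 _
  have hNinv : 0 < (N : ℝ)⁻¹ := inv_pos.2 hN0
  rcases lt_or_ge N (max 2 N₀) with hsmall | hlarge
  · have hle := EConf_mono (N := N) (J := J) (h := h)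
      (f := fun σ => |1 - incrementSq N J h σ / L|) (g := fun _ => 1 + 4 / L) (fun σ _ => by
        have h1 := div_nonneg (incrementSq_nonneg J h σ) hL.le
        have h2 := div_le_div_of_nonneg_right (incrementSq_le J h σ) hL.le
        rw [abs_le]
        constructor <;> linarith)
    rw [EConf_const] at hle
    have hratio : 1 ≤ ((max 2 N₀ : ℕ) : ℝ) * (N : ℝ)⁻¹ := by
      rw [← div_eq_mul_inv, one_le_div hN0]
      exact_mod_cast hsmall.le
    calc _ ≤ 1 + 4 / L := hle
      _ ≤ (1 + 4 / L) * (((max 2 N₀ : ℕ) : ℝ) * (N : ℝ)⁻¹) :=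
        le_mul_of_one_le_right (by positivity) hratio
      _ = (1 + 4 / L) * ((max 2 N₀ : ℕ) : ℝ) * (N : ℝ)⁻¹ := by ring
      _ ≤ _ := mul_le_mul (le_add_of_nonneg_left (by positivity)) (by linarith) hNinv.le
        (by positivity)
  · have hN2 : 2 ≤ N := (le_max_left _ _).trans hlarge
    have habs := EConf_abs_le hN (hpow N ((le_max_right _ _).trans hlarge) hN)
    have hle := EConf_mono (N := N) (J := J) (h := h)
      (f := fun σ => |1 - incrementSq N J h σ / L|)
      (g := fun σ => B / L * (N : ℝ)⁻¹ + Λ / L * |mConf σ - m₀|) (fun σ hw => by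
        have h1 := abs_incrementSq_sub_Ltwo_le hN2 hJ hw
        have h2 := hLip _ (mConf_mem σ) _ hm₀
        have h3 := abs_sub_le (incrementSq N J h σ) (Ltwo J h (mConf σ)) L
        have h4 : |1 - incrementSq N J h σ / L| = |incrementSq N J h σ - L| / L := by
          rw [← abs_of_pos hL, ← abs_div, abs_of_pos hL, sub_div, div_self hL.ne', abs_sub_comm]
        have h5 : B / L * (N : ℝ)⁻¹ + Λ / L * |mConf σ - m₀| =
            (B / N + Λ * |mConf σ - m₀|) / L := by ring
        rw [h4, h5]
        exact div_le_div_of_nonneg_right (h3.trans (add_le_add h1 h2)) hL.le)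
    rw [EConf_add, EConf_const, EConf_const_mul] at hle
    have hmul := mul_le_mul_of_nonneg_left habs (by positivity : 0 ≤ Λ / L)
    calc _ ≤ B / L * (N : ℝ)⁻¹ + Λ / L * ((1 + C) * r) := by linarith
      _ ≤ B / L * (r + (N : ℝ)⁻¹) + Λ / L * (1 + C) * (r + (N : ℝ)⁻¹) := by
        rw [← mul_assoc]
        gcongr <;> linarith
      _ = (B + Λ * (1 + C)) / L * (r + (N : ℝ)⁻¹) := by ring
      _ ≤ _ := mul_le_mul_of_nonneg_right (le_add_of_nonneg_right (by positivity)) (by positivity)
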